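/- arXiv:0709.1514 — 2 statements merged into one kernel-verified Lean document; each statement's English description precedes it below -/
import Mathlib

section
/- Fix k ≥ 1 and suppose the discrete order parameter (m,q) with at most k atoms achieves the minimum of P(·;β) over all discrete order parameters with at most k atoms. Then for every p ∈ S, the partial derivative of P(m,q;β) with respect to β_p exists and equals β_p (1 − Σ_{l=1}^{k} (m_l − m_{l−1}) q_l^p). -/
open MeasureTheory ProbabilityTheory Real Filter Topology

noncomputable section

/-- The centered Gaussian measure on `ℝ` with variance `v` (Dirac at `0` if `v ≤ 0`). -/
def gauss (v : ℝ) : Measure ℝ := gaussianReal 0 v.toNNReal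

/-- `ξ(x) = Σ_{p ∈ S} β_p^2 x^p`. -/
def xiFn (S : Finset ℕ) (β : ℕ → ℝ) (x : ℝ) : ℝ := ∑ p ∈ S, β p ^ 2 * x ^ p

/-- `ξ'(x) = Σ_{p ∈ S} β_p^2 p x^(p-1)`. -/
def xiFn' (S : Finset ℕ) (β : ℕ → ℝ) (x : ℝ) : ℝ := ∑ p ∈ S, β p ^ 2 * p * x ^ (p - 1)

/-- `θ(x) = x ξ'(x) - ξ(x)`. -/
def thetaFn (S : Finset ℕ) (β : ℕ → ℝ) (x : ℝ) : ℝ := x * xiFn' S β x - xiFn S β x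

/-- A discrete order parameter with at most `k` atoms:
`0 = m_0 ≤ m_1 ≤ ⋯ ≤ m_k = 1` with `m_l > 0` for `1 ≤ l ≤ k`,
and `0 = q_0 ≤ q_1 ≤ ⋯ ≤ q_k ≤ q_{k+1} = 1`. -/
structure OrderParam (k : ℕ) where
  m : ℕ → ℝ
  q : ℕ → ℝ
  m_zero : m 0 = 0
  m_last : m k = 1
  m_mono : ∀ l, l < k → m l ≤ m (l + 1)
  m_pos : ∀ l, 1 ≤ l → l ≤ k → 0 < m l
  q_zero : q 0 = 0
  q_last : q (k + 1) = 1
  q_mono : ∀ l, l ≤ k → q l ≤ q (l + 1)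

/-- The recursively defined functions of the Parisi functional:
`parisiB m v k j = A_{k-j}`, so `parisiB m v k 0 = A_k = log cosh` and
`parisiB m v k k = A_0`, where
`A_{l-1}(x) = (1/m_l) log ∫ exp (m_l A_l (x+y)) dγ_{v_l}(y)`. -/
def parisiB (m v : ℕ → ℝ) (k : ℕ) : ℕ → ℝ → ℝ
  | 0, x => Real.log (Real.cosh x)
  | j + 1, x =>
      (1 / m (k - j)) *
        Real.log (∫ y, Real.exp (m (k - j) * parisiB m v k j (x + y)) ∂(gauss (v (k - j))))

/-- The variances `v_0 = ξ'(q_1)` and `v_l = ξ'(q_{l+1}) - ξ'(q_l)` for `l ≥ 1`. -/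
def opVar (S : Finset ℕ) (β : ℕ → ℝ) {k : ℕ} (op : OrderParam k) : ℕ → ℝ := fun l =>
  if l = 0 then xiFn' S β (op.q 1) else xiFn' S β (op.q (l + 1)) - xiFn' S β (op.q l)

/-- The discrete Parisi functional
`P(m,q;β) = ∫ A_0(h+y) dγ_{v_0}(y) - (1/2) Σ_{1≤l≤k} m_l (θ(q_{l+1}) - θ(q_l))`. -/
def parisiP (S : Finset ℕ) (h : ℝ) (β : ℕ → ℝ) {k : ℕ} (op : OrderParam k) : ℝ :=
  (∫ y, parisiB op.m (opVar S β op) k k (h + y) ∂(gauss (opVar S β op 0))) -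
    (1 / 2) * ∑ l ∈ Finset.Icc 1 k, op.m l * (thetaFn S β (op.q (l + 1)) - thetaFn S β (op.q l))

/-- The Parisi formula: infimum over `k ≥ 1` and discrete order parameters with at
most `k` atoms. -/
def parisiF (S : Finset ℕ) (h : ℝ) (β : ℕ → ℝ) : ℝ :=
  sInf {x : ℝ | ∃ k : ℕ, 1 ≤ k ∧ ∃ op : OrderParam k, x = parisiP S h β op}

/-- One-sided formulation of being `1`-Lipschitz. -/
def Lip1 (F : ℝ → ℝ) : Prop := ∀ x y, F x ≤ F y + |x - y|

lemma Lip1.continuous {F : ℝ → ℝ} (hF : Lip1 F) : Continuous F := by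
  have : LipschitzWith 1 F := by
    apply LipschitzWith.of_le_add_mul
    intro x y
    simpa [Real.dist_eq] using hF x y
  exact this.continuous

instance gauss_prob (v : ℝ) : IsProbabilityMeasure (gauss v) := by
  unfold gauss; infer_instance

lemma gauss_zero : gauss 0 = Measure.dirac 0 := by
  unfold gauss; simp

lemma gauss_sq (s : ℝ) : gauss (s ^ 2) = (gauss 1).map (fun z => s * z) := by
  unfold gauss
  rw [gaussianReal_map_const_mul]
  congr 1
  · simp
  · ext; simp [sq_nonneg]

lemma integral_gauss_sq (s : ℝ) {f : ℝ → ℝ} (hf : Continuous f) :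
    ∫ y, f y ∂(gauss (s ^ 2)) = ∫ z, f (s * z) ∂(gauss 1) := by
  rw [gauss_sq, integral_map (by fun_prop) (hf.aestronglyMeasurable)]

lemma integrable_exp_abs (v c : ℝ) : Integrable (fun y => exp (c * |y|)) (gauss v) := by
  unfold gauss
  exact integrable_exp_mul_abs (integrable_exp_mul_gaussianReal c)
    (integrable_exp_mul_gaussianReal (-c))

lemma abs_le_exp_abs (y : ℝ) : |y| ≤ exp |y| := by
  linarith [add_one_le_exp |y|]

lemma integrable_of_exp_bound {v C c : ℝ} {f : ℝ → ℝ} (hf : Continuous f)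
    (h : ∀ y, |f y| ≤ C * exp (c * |y|)) : Integrable f (gauss v) := by
  refine ((integrable_exp_abs v c).const_mul C).mono' hf.aestronglyMeasurable ?_
  exact Eventually.of_forall (fun y => by simpa using h y)

lemma Lip1.abs_bound {F : ℝ → ℝ} (hF : Lip1 F) (x y : ℝ) : |F (x + y) - F x| ≤ |y| := by
  have h1 := hF (x + y) x
  have h2 := hF x (x + y)
  have e1 : x + y - x = y := by ring
  have e2 : x - (x + y) = -y := by ring
  rw [e1] at h1
  rw [e2, abs_neg] at h2
  rw [abs_le]; constructor <;> linarith

lemma Lip1.integrable_exp {F : ℝ → ℝ} (hF : Lip1 F) (c v x : ℝ) :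
    Integrable (fun y => exp (c * F (x + y))) (gauss v) := by
  have hc := hF.continuous
  refine integrable_of_exp_bound (C := exp (c * F x)) (c := |c|) (by fun_prop) ?_
  intro y
  rw [abs_of_pos (exp_pos _), ← exp_add]
  apply exp_le_exp.2
  have h1 := hF.abs_bound x y
  have : c * (F (x + y) - F x) ≤ |c| * |y| := by
    calc _ ≤ |c * (F (x + y) - F x)| := le_abs_self _
      _ = |c| * |F (x + y) - F x| := abs_mul _ _
      _ ≤ _ := by gcongr
  linarith

lemma Lip1.integrable {F : ℝ → ℝ} (hF : Lip1 F) (v x : ℝ) :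
    Integrable (fun y => F (x + y)) (gauss v) := by
  have hc := hF.continuous
  refine integrable_of_exp_bound (C := |F x| + 1) (c := 1) (by fun_prop) ?_
  intro y
  have h1 := hF.abs_bound x y
  have h2 := abs_le_exp_abs y
  have h3 : (1:ℝ) ≤ exp |y| := one_le_exp (abs_nonneg _)
  have h4 : |F (x + y)| ≤ |F x| + |y| := by
    have := abs_add_le (F x) (F (x + y) - F x)
    simp only [add_sub_cancel] at this
    linarith
  rw [one_mul]
  nlinarith [abs_nonneg (F x)]

/-- The elementary step of the Parisi recursion. -/
def TT (m v : ℝ) (F : ℝ → ℝ) (x : ℝ) : ℝ :=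
  (1 / m) * Real.log (∫ y, Real.exp (m * F (x + y)) ∂(gauss v))

lemma parisiB_zero (m v : ℕ → ℝ) (k : ℕ) :
    parisiB m v k 0 = fun x => Real.log (Real.cosh x) := rfl

lemma parisiB_succ (m v : ℕ → ℝ) (k j : ℕ) :
    parisiB m v k (j + 1) = TT (m (k - j)) (v (k - j)) (parisiB m v k j) := rfl

lemma Lip1.int_pos {F : ℝ → ℝ} (hF : Lip1 F) (c v x : ℝ) :
    0 < ∫ y, exp (c * F (x + y)) ∂(gauss v) :=
  integral_exp_pos (hF.integrable_exp c v x)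

lemma exp_TT {F : ℝ → ℝ} (hF : Lip1 F) {m : ℝ} (hm : 0 < m) (v x : ℝ) :
    exp (m * TT m v F x) = ∫ y, exp (m * F (x + y)) ∂(gauss v) := by
  unfold TT
  rw [← mul_assoc, mul_one_div_cancel hm.ne', one_mul, exp_log (hF.int_pos m v x)]

/-- Comparison for two steps with possibly different base points. -/
lemma TT_le {F G : ℝ → ℝ} (hF : Lip1 F) (hG : Lip1 G) {m : ℝ} (hm : 0 < m) (v x x' c : ℝ)
    (h : ∀ y, F (x + y) ≤ G (x' + y) + c) : TT m v F x ≤ TT m v G x' + c := by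
  have key : exp (m * TT m v F x) ≤ exp (m * (TT m v G x' + c)) := by
    rw [mul_add, exp_add, exp_TT hF hm, exp_TT hG hm, ← integral_mul_const]
    apply integral_mono (hF.integrable_exp _ _ _) ((hG.integrable_exp _ _ _).mul_const _)
    intro y
    simp only
    rw [← exp_add, ← mul_add]
    exact exp_le_exp.2 (mul_le_mul_of_nonneg_left (h y) hm.le)
  exact le_of_mul_le_mul_left (exp_le_exp.1 key) hm

lemma TT_lip {F : ℝ → ℝ} (hF : Lip1 F) {m : ℝ} (hm : 0 < m) (v : ℝ) : Lip1 (TT m v F) := by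
  intro x y
  apply TT_le hF hF hm
  intro z
  have := hF (x + z) (y + z)
  simpa using this

lemma TT_zero (F : ℝ → ℝ) {m : ℝ} (hm : 0 < m) : TT m 0 F = F := by
  funext x
  unfold TT
  rw [gauss_zero]
  simp only [integral_dirac, add_zero, log_exp]
  field_simp

lemma integral_gauss_add {v t : ℝ} (hv : 0 ≤ v) (ht : 0 ≤ t) {f : ℝ → ℝ}
    (hf : Integrable f (gauss (v + t))) :
    ∫ y, f y ∂(gauss (v + t)) = ∫ y, ∫ z, f (y + z) ∂(gauss t) ∂(gauss v) := by
  have e : gauss (v + t) = (gauss v).conv (gauss t) := by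
    unfold gauss
    rw [gaussianReal_conv_gaussianReal, Real.toNNReal_add hv ht, add_zero]
  rw [e] at hf ⊢
  rw [integral_conv hf]

lemma TT_add {F : ℝ → ℝ} (hF : Lip1 F) {m : ℝ} (hm : 0 < m) {v t : ℝ} (hv : 0 ≤ v)
    (ht : 0 ≤ t) (x : ℝ) : TT m (v + t) F x = TT m v (TT m t F) x := by
  have key : exp (m * TT m (v + t) F x) = exp (m * TT m v (TT m t F) x) := by
    rw [exp_TT hF hm, exp_TT (TT_lip hF hm t) hm,
      integral_gauss_add hv ht (hF.integrable_exp m (v + t) x)]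
    congr 1
    funext y
    rw [exp_TT hF hm]
    simp only [add_assoc]
  exact mul_left_cancel₀ hm.ne' (exp_injective key)

lemma TT_jensen {F : ℝ → ℝ} (hF : Lip1 F) {m : ℝ} (hm : 0 < m) (t x : ℝ) :
    ∫ y, F (x + y) ∂(gauss t) ≤ TT m t F x := by
  have h := ConvexOn.map_integral_le (μ := gauss t) (f := fun y => m * F (x + y)) convexOn_exp
    continuous_exp.continuousOn isClosed_univ (by simp)
    ((hF.integrable t x).const_mul m) (hF.integrable_exp m t x)
  rw [← exp_TT hF hm, integral_const_mul] at h
  exact le_of_mul_le_mul_left (exp_le_exp.1 h) hm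

/-- log cosh -/
def LC (x : ℝ) : ℝ := Real.log (Real.cosh x)

lemma exp_LC (x : ℝ) : exp (LC x) = cosh x := exp_log (cosh_pos x)

lemma LC_lip : Lip1 LC := by
  intro x y
  apply exp_le_exp.1
  rw [exp_add, exp_LC, exp_LC]
  have e : x = y + (x - y) := by ring
  have h1 : cosh x = (exp y * exp (x - y) + exp (-y) * exp (-(x - y))) / 2 := by
    rw [cosh_eq, ← exp_add, ← exp_add]; ring_nf
  rw [h1, cosh_eq]
  have h2 : exp (x - y) ≤ exp |x - y| := exp_le_exp.2 (le_abs_self _)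
  have h3 : exp (-(x - y)) ≤ exp |x - y| := exp_le_exp.2 (neg_le_abs _)
  nlinarith [exp_pos y, exp_pos (-y)]

lemma integral_exp_gauss {t : ℝ} (ht : 0 ≤ t) (c : ℝ) :
    ∫ y, exp (c * y) ∂(gauss t) = exp (c ^ 2 * t / 2) := by
  have h := congrFun (mgf_id_gaussianReal (μ := 0) (v := t.toNNReal)) c
  unfold mgf at h
  simp only [id] at h
  unfold gauss
  rw [h, Real.coe_toNNReal t ht]
  congr 1; ring

lemma integrable_exp_gauss (t c : ℝ) : Integrable (fun y => exp (c * y)) (gauss t) := by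
  unfold gauss; exact integrable_exp_mul_gaussianReal c

/-- weight of `+1` -/
def wt (x : ℝ) : ℝ := exp x / (2 * cosh x)

lemma wt_nonneg (x : ℝ) : 0 ≤ wt x := by
  unfold wt; have := cosh_pos x; positivity

lemma one_sub_wt (x : ℝ) : 1 - wt x = exp (-x) / (2 * cosh x) := by
  unfold wt
  have := cosh_pos x
  field_simp
  rw [cosh_eq]; ring

lemma one_sub_wt_nonneg (x : ℝ) : 0 ≤ 1 - wt x := by
  rw [one_sub_wt]; have := cosh_pos x; positivity

lemma cosh_add_wt (x y : ℝ) :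
    cosh (x + y) = cosh x * (wt x * exp y + (1 - wt x) * exp (-y)) := by
  rw [one_sub_wt]
  unfold wt
  have := cosh_pos x
  field_simp
  rw [cosh_eq, exp_add, neg_add, exp_add]; ring

lemma TT_LC_one {t : ℝ} (ht : 0 ≤ t) (x : ℝ) : TT 1 t LC x = LC x + t / 2 := by
  apply exp_injective
  have h := exp_TT LC_lip one_pos t x
  simp only [one_mul] at h
  rw [h, exp_add, exp_LC]
  simp only [exp_LC]
  simp_rw [cosh_add_wt]
  rw [integral_const_mul]
  have i1 := integrable_exp_gauss t 1
  have i2 := integrable_exp_gauss t (-1)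
  have j1 := integral_exp_gauss ht 1
  have j2 := integral_exp_gauss ht (-1)
  simp only [one_mul, neg_mul] at i1 i2 j1 j2
  rw [integral_add (i1.const_mul _) (i2.const_mul _), integral_const_mul, integral_const_mul,
    j1, j2]
  have e : ((-1 : ℝ)) ^ 2 = 1 := by norm_num
  rw [e, one_pow, one_mul]
  ring

lemma TT_LC_lower {t m : ℝ} (ht : 0 ≤ t) (hm : 0 < m) (hm1 : m ≤ 1) (x : ℝ) :
    LC x + m * t / 2 ≤ TT m t LC x := by
  have key : exp (m * (LC x + m * t / 2)) ≤ exp (m * TT m t LC x) := by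
    rw [exp_TT LC_lip hm]
    have i1 := integrable_exp_gauss t m
    have i2 := integrable_exp_gauss t (-m)
    have j1 := integral_exp_gauss ht m
    have j2 := integral_exp_gauss ht (-m)
    have hI : exp (m * (LC x + m * t / 2)) =
        ∫ y, exp (m * LC x) * (wt x * exp (m * y) + (1 - wt x) * exp (-m * y)) ∂(gauss t) := by
      rw [integral_const_mul, integral_add (i1.const_mul _) (i2.const_mul _), integral_const_mul,
        integral_const_mul, j1, j2, mul_add, exp_add]
      ring_nf
    rw [hI]
    apply integral_mono (((i1.const_mul _).add (i2.const_mul _)).const_mul _)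
      (LC_lip.integrable_exp m t x)
    intro y
    have e : ∀ z, exp (m * LC z) = cosh z ^ m := by
      intro z
      rw [rpow_def_of_pos (cosh_pos z), mul_comm]; rfl
    have hA : 0 ≤ wt x * exp y + (1 - wt x) * exp (-y) := by
      have := wt_nonneg x
      have := one_sub_wt_nonneg x
      positivity
    simp only
    rw [e, e, cosh_add_wt, mul_rpow (cosh_pos x).le hA]
    have hcc := (concaveOn_rpow hm.le hm1).2 (show exp y ∈ Set.Ici (0:ℝ) from (exp_pos _).le)
      (show exp (-y) ∈ Set.Ici (0:ℝ) from (exp_pos _).le) (wt_nonneg x) (one_sub_wt_nonneg x)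
      (by ring)
    simp only [smul_eq_mul] at hcc
    rw [← exp_mul, ← exp_mul] at hcc
    have e3 : y * m = m * y := by ring
    have e4 : -y * m = -m * y := by ring
    rw [e3, e4] at hcc
    exact mul_le_mul_of_nonneg_left hcc (rpow_nonneg (cosh_pos x).le _)
  exact le_of_mul_le_mul_left (exp_le_exp.1 key) hm

lemma integral_LC_lower (t x : ℝ) : LC x ≤ ∫ y, LC (x + y) ∂(gauss t) := by
  have hb : ∀ y, LC x + (2 * wt x - 1) * y ≤ LC (x + y) := by
    intro y
    apply exp_le_exp.1
    rw [exp_add, exp_LC, exp_LC, cosh_add_wt]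
    have hcc := convexOn_exp.2 (Set.mem_univ y) (Set.mem_univ (-y)) (wt_nonneg x)
      (one_sub_wt_nonneg x) (by ring)
    simp only [smul_eq_mul] at hcc
    have e : wt x * y + (1 - wt x) * -y = (2 * wt x - 1) * y := by ring
    rw [e] at hcc
    exact mul_le_mul_of_nonneg_left hcc (cosh_pos x).le
  have hi : Integrable (fun y : ℝ => y) (gauss t) := by
    have : Lip1 (fun y => y) := by
      intro x y; linarith [le_abs_self (x - y)]
    simpa using this.integrable t 0
  have h0 : ∫ y, y ∂(gauss t) = 0 := by unfold gauss; simp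
  have hI : LC x = ∫ y, (LC x + (2 * wt x - 1) * y) ∂(gauss t) := by
    rw [integral_add (integrable_const _) (hi.const_mul _), integral_const_mul, h0]
    simp
  rw [hI]
  exact integral_mono ((integrable_const _).add (hi.const_mul _)) (LC_lip.integrable t x) hb

/-- The main term of the Parisi functional as a function of the variances. -/
def Phi (m : ℕ → ℝ) (k : ℕ) (h : ℝ) (v : ℕ → ℝ) : ℝ :=
  ∫ y, parisiB m v k k (h + y) ∂(gauss (v 0))

lemma parisiB_lip {m : ℕ → ℝ} {k : ℕ} (hm : ∀ l, 1 ≤ l → l ≤ k → 0 < m l) (v : ℕ → ℝ) :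
    ∀ j, j ≤ k → Lip1 (parisiB m v k j)
  | 0, _ => LC_lip
  | j + 1, hj => by
      rw [parisiB_succ]
      exact TT_lip (parisiB_lip hm v j (by omega)) (hm _ (by omega) (by omega)) _

lemma parisiB_congr {m v v' : ℕ → ℝ} {k : ℕ} :
    ∀ j, j ≤ k → (∀ l, k - j < l → l ≤ k → v l = v' l) → parisiB m v k j = parisiB m v' k j
  | 0, _, _ => rfl
  | j + 1, hj, h => by
      rw [parisiB_succ, parisiB_succ, parisiB_congr j (by omega)
        (fun l h1 h2 => h l (by omega) h2), h (k - j) (by omega) (by omega)]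

lemma Phi_congr {m v v' : ℕ → ℝ} {k : ℕ} {h : ℝ} (hv : ∀ l, l ≤ k → v l = v' l) :
    Phi m k h v = Phi m k h v' := by
  unfold Phi
  rw [parisiB_congr (v := v) (v' := v') k le_rfl (fun l _ h2 => hv l h2), hv 0 (by omega)]

lemma parisiB_le {m v v' : ℕ → ℝ} {k : ℕ} (hm : ∀ l, 1 ≤ l → l ≤ k → 0 < m l) {j : ℕ} (c : ℝ)
    (hv : ∀ l, 1 ≤ l → l ≤ k - j → v l = v' l)
    (h : ∀ x, parisiB m v k j x ≤ parisiB m v' k j x + c) (i : ℕ) (hi : j + i ≤ k) :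
    ∀ x, parisiB m v k (j + i) x ≤ parisiB m v' k (j + i) x + c := by
  induction i with
  | zero => exact h
  | succ i ih =>
    intro x
    rw [← add_assoc, parisiB_succ, parisiB_succ, hv (k - (j + i)) (by omega) (by omega)]
    exact TT_le (parisiB_lip hm v _ (by omega)) (parisiB_lip hm v' _ (by omega))
      (hm _ (by omega) (by omega)) _ _ _ _ (fun y => ih (by omega) _)

lemma Phi_le {m v v' : ℕ → ℝ} {k : ℕ} (hm : ∀ l, 1 ≤ l → l ≤ k → 0 < m l) {j : ℕ} (hj : j ≤ k)
    {h : ℝ} (c : ℝ)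
    (hv : ∀ l, l ≤ k - j → v l = v' l)
    (hle : ∀ x, parisiB m v k j x ≤ parisiB m v' k j x + c) :
    Phi m k h v ≤ Phi m k h v' + c := by
  have h1 := parisiB_le hm c (fun l _ h2 => hv l h2) hle (k - j) (by omega)
  have e : j + (k - j) = k := by omega
  rw [e] at h1
  unfold Phi
  rw [hv 0 (by omega)]
  have i2 := (parisiB_lip hm v' k le_rfl).integrable (v' 0) h
  have e2 : (∫ y, parisiB m v' k k (h + y) ∂(gauss (v' 0))) + c =
      ∫ y, (parisiB m v' k k (h + y) + c) ∂(gauss (v' 0)) := by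
    rw [integral_add i2 (integrable_const _)]; simp
  rw [e2]
  exact integral_mono ((parisiB_lip hm v k le_rfl).integrable (v' 0) h)
    (i2.add (integrable_const _)) (fun y => h1 _)

lemma Phi_strip {m v : ℕ → ℝ} {k : ℕ} (hm : ∀ l, 1 ≤ l → l ≤ k → 0 < m l) (hk : 1 ≤ k)
    (hmk : m k = 1) (hvk : 0 ≤ v k) (h : ℝ) :
    Phi m k h v = v k / 2 + Phi m k h (Function.update v k 0) := by
  have h1 : ∀ x, parisiB m v k 1 x = LC x + v k / 2 := by
    intro x
    have h3 := parisiB_succ m v k 0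
    rw [zero_add, Nat.sub_zero, hmk] at h3
    rw [h3]
    exact TT_LC_one hvk x
  have h2 : ∀ x, parisiB m (Function.update v k 0) k 1 x = LC x := by
    intro x
    have h3 := parisiB_succ m (Function.update v k 0) k 0
    rw [zero_add, Nat.sub_zero, hmk, Function.update_self, TT_zero _ one_pos] at h3
    rw [h3]
    rfl
  have hv : ∀ l, l ≤ k - 1 → v l = Function.update v k 0 l := by
    intro l hl
    rw [Function.update_of_ne (by omega)]
  have a1 := Phi_le (h := h) hm hk (v k / 2) hv (fun x => by rw [h1, h2])
  have a2 := Phi_le (h := h) hm hk (-(v k / 2)) (fun l hl => (hv l hl).symm)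
    (fun x => by rw [h1, h2]; linarith)
  linarith

lemma parisiB_skip {m v : ℕ → ℝ} {k : ℕ} (hm : ∀ l, 1 ≤ l → l ≤ k → 0 < m l) (j i : ℕ)
    (hi : j + i ≤ k) (hv : ∀ l, k - (j + i) < l → l ≤ k - j → v l = 0) :
    parisiB m v k (j + i) = parisiB m v k j := by
  induction i with
  | zero => rfl
  | succ i ih =>
    rw [← add_assoc, parisiB_succ, hv (k - (j + i)) (by omega) (by omega),
      TT_zero _ (hm _ (by omega) (by omega))]
    exact ih (by omega) (fun l h1 h2 => hv l (by omega) h2)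

lemma Phi_zero_block {m v v' : ℕ → ℝ} {k : ℕ} (hm : ∀ l, 1 ≤ l → l ≤ k → 0 < m l) {r : ℕ}
    (hr1 : 1 ≤ r) (hrk : r ≤ k) {t : ℝ} (ht : 0 ≤ t) (htr : t ≤ v r) (hv0 : 0 ≤ v 0)
    (hz : ∀ l, 1 ≤ l → l < r → v l = 0)
    (h0 : v' 0 = v 0 + t) (hr : v' r = v r - t)
    (hv : ∀ l, 1 ≤ l → l ≤ k → l ≠ r → v' l = v l) (h : ℝ) :
    Phi m k h v' ≤ Phi m k h v := by
  have hmr := hm r hr1 hrk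
  have e : (k - r + 1) + (r - 1) = k := by omega
  have e1 : k - (k - r) = r := by omega
  have s1 := parisiB_skip (v := v) hm (k - r + 1) (r - 1) (by omega)
    (fun l a b => hz l (by omega) (by omega))
  have s2 := parisiB_skip (v := v') hm (k - r + 1) (r - 1) (by omega)
    (fun l a b => by rw [hv l (by omega) (by omega) (by omega)]; exact hz l (by omega) (by omega))
  rw [e, parisiB_succ, e1] at s1 s2
  have s3 : parisiB m v' k (k - r) = parisiB m v k (k - r) :=
    parisiB_congr _ (by omega) (fun l a b => hv l (by omega) b (by omega))
  rw [s3] at s2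
  set G := parisiB m v k (k - r) with hG
  have hGl : Lip1 G := parisiB_lip hm v _ (by omega)
  unfold Phi
  rw [s1, s2, h0, hr]
  have hAl : Lip1 (TT (m r) (v r - t) G) := TT_lip hGl hmr _
  rw [integral_gauss_add hv0 ht (hAl.integrable _ _)]
  have hd : ∀ x, TT (m r) (v r) G x = TT (m r) t (TT (m r) (v r - t) G) x := by
    intro x
    rw [← TT_add hGl hmr ht (by linarith)]
    congr 1; ring
  have hsm : Integrable (fun y => ∫ z, TT (m r) (v r - t) G (h + (y + z)) ∂(gauss t))
      (gauss (v 0)) := by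
    have hL : Lip1 (fun x => ∫ z, TT (m r) (v r - t) G (x + z) ∂(gauss t)) := by
      intro x y
      have e2 : (∫ z, TT (m r) (v r - t) G (y + z) ∂(gauss t)) + |x - y| =
          ∫ z, (TT (m r) (v r - t) G (y + z) + |x - y|) ∂(gauss t) := by
        rw [integral_add (hAl.integrable _ _) (integrable_const _)]; simp
      rw [e2]
      apply integral_mono (hAl.integrable _ _) ((hAl.integrable _ _).add (integrable_const _))
      intro z
      have := hAl (x + z) (y + z)
      simpa using this
    have := hL.integrable (v 0) h
    simpa only [add_assoc] using this
  apply integral_mono hsm ((TT_lip hGl hmr _).integrable _ _)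
  intro y
  simp only
  rw [hd, ← funext fun z => congrArg _ (add_assoc h y z)]
  exact TT_jensen hAl hmr t (h + y)

lemma Phi_one_block {m v v' : ℕ → ℝ} {k : ℕ} (hm : ∀ l, 1 ≤ l → l ≤ k → 0 < m l)
    (hm1 : ∀ l, l ≤ k → m l ≤ 1) (hm0 : m 0 = 0) {r : ℕ}
    (hrk : r < k) {t : ℝ} (ht : 0 ≤ t) (hv0 : 0 ≤ v r)
    (hz : ∀ l, r < l → l ≤ k → v l = 0)
    (hr : v' r = v r + t)
    (hv : ∀ l, l ≤ k → l ≠ r → v' l = v l) (h : ℝ) :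
    Phi m k h v + m r * t / 2 ≤ Phi m k h v' := by
  have s1 := parisiB_skip (v := v) hm 0 (k - r) (by omega)
    (fun l a b => hz l (by omega) (by omega))
  have s2 := parisiB_skip (v := v') hm 0 (k - r) (by omega)
    (fun l a b => by rw [hv l (by omega) (by omega)]; exact hz l (by omega) (by omega))
  rw [zero_add] at s1 s2
  have e0 : ∀ w, parisiB m w k 0 = LC := fun _ => rfl
  rw [e0] at s1 s2
  rcases Nat.eq_zero_or_pos r with h0 | hpos
  · subst h0
    simp only [Nat.sub_zero] at s1 s2
    unfold Phi
    rw [s1, s2, hr, hm0, integral_gauss_add hv0 ht (LC_lip.integrable _ _)]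
    simp only [zero_mul, zero_div, add_zero]
    have hL : Lip1 (fun x => ∫ z, LC (x + z) ∂(gauss t)) := by
      intro x y
      have e2 : (∫ z, LC (y + z) ∂(gauss t)) + |x - y| =
          ∫ z, (LC (y + z) + |x - y|) ∂(gauss t) := by
        rw [integral_add (LC_lip.integrable _ _) (integrable_const _)]; simp
      rw [e2]
      apply integral_mono (LC_lip.integrable _ _) ((LC_lip.integrable _ _).add (integrable_const _))
      intro z
      have := LC_lip (x + z) (y + z)
      simpa using this
    have hsm := hL.integrable (v 0) h
    simp_rw [add_assoc] at hsm
    apply integral_mono (LC_lip.integrable _ _) hsm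
    intro y
    simp only
    rw [← funext fun z => congrArg _ (add_assoc h y z)]
    exact integral_LC_lower t (h + y)
  · have hmr := hm r hpos hrk.le
    have e1 : k - (k - r) = r := by omega
    have key : ∀ x, parisiB m v k (k - r + 1) x ≤ parisiB m v' k (k - r + 1) x + -(m r * t / 2) := by
      intro x
      rw [parisiB_succ, parisiB_succ, s1, s2, e1, hr, TT_add LC_lip hmr hv0 ht]
      apply TT_le LC_lip (TT_lip LC_lip hmr t) hmr
      intro y
      have := TT_LC_lower ht hmr (hm1 r hrk.le) (x + y)
      linarith
    have := Phi_le (h := h) hm (by omega) _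
      (fun l hl => (hv l (by omega) (by omega)).symm) key
    linarith

lemma differentiable_integral_gauss {k : ℕ} {H : (Fin k → ℝ) × ℝ → ℝ → ℝ}
    (hc : Continuous (fun a : ((Fin k → ℝ) × ℝ) × ℝ => H a.1 a.2))
    (hd : ∀ z, Differentiable ℝ (fun p => H p z))
    (hb : ∀ p0, ∃ C c : ℝ, (∀ z, |H p0 z| ≤ C * exp (c * |z|)) ∧
      ∀ p ∈ Metric.ball p0 1, ∀ p' ∈ Metric.ball p0 1, ∀ z,
        H p z ≤ H p' z + C * exp (c * |z|) * ‖p - p'‖) :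
    Differentiable ℝ (fun p => ∫ z, H p z ∂(gauss 1)) := by
  intro p0
  obtain ⟨C, c, h1, h2⟩ := hb p0
  have hC : ∀ z, 0 ≤ C * exp (c * |z|) := fun z => (abs_nonneg _).trans (h1 z)
  have hcp : ∀ p, Continuous (H p) := fun p => hc.comp (by fun_prop : Continuous fun z => (p, z))
  have hmeas : Measurable (fun z => fderiv ℝ (fun p => H p z) p0) := by
    have hc' : Continuous (Function.uncurry (fun (z : ℝ) (p : (Fin k → ℝ) × ℝ) => H p z)) :=
      hc.comp (by fun_prop : Continuous fun a : ℝ × ((Fin k → ℝ) × ℝ) => (a.2, a.1))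
    exact (measurable_fderiv_with_param (𝕜 := ℝ) hc').comp
      (by fun_prop : Measurable fun z : ℝ => (z, p0))
  have key := hasFDerivAt_integral_of_dominated_loc_of_lip (𝕜 := ℝ) (μ := gauss 1) (F := H)
    (F' := fun z => fderiv ℝ (fun p => H p z) p0) (x₀ := p0)
    (bound := fun z => C * exp (c * |z|))
    (Metric.ball_mem_nhds p0 one_pos)
    (Eventually.of_forall fun p => (hcp p).aestronglyMeasurable)
    (integrable_of_exp_bound (hcp p0) h1)
    hmeas.aestronglyMeasurable
    (Eventually.of_forall fun z => by
      apply LipschitzOnWith.of_le_add_mul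
      intro p hp p' hp'
      rw [Real.coe_nnabs, abs_of_nonneg (hC z), dist_eq_norm]
      exact h2 p hp p' hp' z)
    ((integrable_exp_abs 1 c).const_mul C)
    (Eventually.of_forall fun z => (hd z p0).hasFDerivAt)
  exact key.2.differentiableAt

/-- Regularity class preserved by the Parisi recursion. -/
structure Good {k : ℕ} (F : (Fin k → ℝ) → ℝ → ℝ) : Prop where
  diff : Differentiable ℝ (fun p : (Fin k → ℝ) × ℝ => F p.1 p.2)
  lip : ∀ σ, Lip1 (F σ)
  loc : ∀ R, ∃ C, 0 ≤ C ∧ ∀ σ σ', ‖σ‖ ≤ R → ‖σ'‖ ≤ R → ∀ x, F σ x ≤ F σ' x + C * ‖σ - σ'‖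

def shf {k : ℕ} (F : (Fin k → ℝ) → ℝ → ℝ) (s : (Fin k → ℝ) →L[ℝ] ℝ)
    (p : (Fin k → ℝ) × ℝ) (z : ℝ) : ℝ := F p.1 (p.2 + s p.1 * z)

lemma Good.shf_cont {k : ℕ} {F : (Fin k → ℝ) → ℝ → ℝ} (hF : Good F)
    (s : (Fin k → ℝ) →L[ℝ] ℝ) :
    Continuous (fun a : ((Fin k → ℝ) × ℝ) × ℝ => shf F s a.1 a.2) :=
  hF.diff.continuous.comp
    (by fun_prop : Continuous fun a : ((Fin k → ℝ) × ℝ) × ℝ => (a.1.1, a.1.2 + s a.1.1 * a.2))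

lemma Good.shf_diff {k : ℕ} {F : (Fin k → ℝ) → ℝ → ℝ} (hF : Good F)
    (s : (Fin k → ℝ) →L[ℝ] ℝ) (z : ℝ) : Differentiable ℝ (fun p => shf F s p z) :=
  hF.diff.comp
    (by fun_prop : Differentiable ℝ fun p : ((Fin k → ℝ) × ℝ) => (p.1, p.2 + s p.1 * z))

lemma Good.shf_le {k : ℕ} {F : (Fin k → ℝ) → ℝ → ℝ} (hF : Good F)
    (s : (Fin k → ℝ) →L[ℝ] ℝ) {R C : ℝ} 
    (hR : ∀ σ σ', ‖σ‖ ≤ R → ‖σ'‖ ≤ R → ∀ x, F σ x ≤ F σ' x + C * ‖σ - σ'‖)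
    (p p' : (Fin k → ℝ) × ℝ) (hp : ‖p.1‖ ≤ R) (hp' : ‖p'.1‖ ≤ R) (z : ℝ) :
    shf F s p z ≤ shf F s p' z + C * ‖p.1 - p'.1‖ + |p.2 - p'.2| + ‖s‖ * ‖p.1 - p'.1‖ * |z| := by
  unfold shf
  have h1 := hR p.1 p'.1 hp hp' (p.2 + s p.1 * z)
  have h2 := hF.lip p'.1 (p.2 + s p.1 * z) (p'.2 + s p'.1 * z)
  have e : p.2 + s p.1 * z - (p'.2 + s p'.1 * z) = (p.2 - p'.2) + s (p.1 - p'.1) * z := by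
    rw [map_sub]; ring
  rw [e] at h2
  have h3 := abs_add_le (p.2 - p'.2) (s (p.1 - p'.1) * z)
  have h4 : |s (p.1 - p'.1) * z| ≤ ‖s‖ * ‖p.1 - p'.1‖ * |z| := by
    rw [abs_mul]
    gcongr
    exact s.le_opNorm _
  linarith

lemma Good.shf_abs {k : ℕ} {F : (Fin k → ℝ) → ℝ → ℝ} (hF : Good F)
    (s : (Fin k → ℝ) →L[ℝ] ℝ) {R : ℝ} (p : (Fin k → ℝ) × ℝ) (hp : ‖p.1‖ ≤ R) (z : ℝ) :
    |shf F s p z - F p.1 p.2| ≤ ‖s‖ * R * |z| := by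
  unfold shf
  refine ((hF.lip p.1).abs_bound p.2 (s p.1 * z)).trans ?_
  rw [abs_mul]
  gcongr
  exact (s.le_opNorm _).trans (by gcongr)

lemma Good.int_diff {k : ℕ} {F : (Fin k → ℝ) → ℝ → ℝ} (hF : Good F)
    (s : (Fin k → ℝ) →L[ℝ] ℝ) :
    Differentiable ℝ (fun p => ∫ z, shf F s p z ∂(gauss 1)) := by
  apply differentiable_integral_gauss (hF.shf_cont s) (hF.shf_diff s)
  intro p0
  obtain ⟨C, hC0, hC⟩ := hF.loc (‖p0‖ + 1)
  have hb : ∀ p ∈ Metric.ball p0 1, ‖p.1‖ ≤ ‖p0‖ + 1 := by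
    intro p hp
    rw [Metric.mem_ball, dist_eq_norm] at hp
    have := norm_le_norm_add_norm_sub p0 p
    have := norm_fst_le p
    rw [norm_sub_rev] at hp
    linarith
  refine ⟨C + 1 + ‖s‖ + |F p0.1 p0.2| + ‖s‖ * (‖p0‖ + 1), 1, ?_, ?_⟩
  · intro z
    have h1 := hF.shf_abs s p0 (hb p0 (Metric.mem_ball_self one_pos)) z
    have h2 := abs_le_exp_abs z
    have h3 : (1:ℝ) ≤ exp |z| := one_le_exp (abs_nonneg _)
    have h4 := abs_add_le (F p0.1 p0.2) (shf F s p0 z - F p0.1 p0.2)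
    rw [add_sub_cancel] at h4
    rw [one_mul]
    have h5 : ‖s‖ * (‖p0‖ + 1) * |z| ≤ ‖s‖ * (‖p0‖ + 1) * exp |z| := by gcongr
    have h6 : |F p0.1 p0.2| * 1 ≤ |F p0.1 p0.2| * exp |z| := by gcongr
    have h7 : 0 ≤ (C + 1 + ‖s‖) * exp |z| := by positivity
    linarith
  · intro p hp p' hp' z
    have h1 := hF.shf_le s hC p p' (hb p hp) (hb p' hp') z
    have h2 := abs_le_exp_abs z
    have h3 : (1:ℝ) ≤ exp |z| := one_le_exp (abs_nonneg _)
    have n1 : ‖p.1 - p'.1‖ ≤ ‖p - p'‖ := norm_fst_le (p - p')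
    have n2 : |p.2 - p'.2| ≤ ‖p - p'‖ := norm_snd_le (p - p')
    rw [one_mul]
    have a1 : C * ‖p.1 - p'.1‖ ≤ C * (exp |z| * ‖p - p'‖) := by
      gcongr
      nlinarith [norm_nonneg (p - p')]
    have a2 : |p.2 - p'.2| ≤ exp |z| * ‖p - p'‖ := by
      nlinarith [norm_nonneg (p - p')]
    have a3 : ‖s‖ * ‖p.1 - p'.1‖ * |z| ≤ ‖s‖ * ‖p - p'‖ * exp |z| := by gcongr
    have a4 : 0 ≤ (|F p0.1 p0.2| + ‖s‖ * (‖p0‖ + 1)) * (exp |z| * ‖p - p'‖) := by positivity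
    linarith

lemma exp_sub_le (a b : ℝ) : exp a ≤ exp b + (a - b) * exp a := by
  have h := add_one_le_exp (b - a)
  have e : exp b = exp (b - a) * exp a := by rw [← exp_add]; ring_nf
  rw [e]
  nlinarith [exp_pos a]

lemma Good.exp_int_diff {k : ℕ} {F : (Fin k → ℝ) → ℝ → ℝ} (hF : Good F)
    (s : (Fin k → ℝ) →L[ℝ] ℝ) {m : ℝ} (hm : 0 < m) :
    Differentiable ℝ (fun p => ∫ z, exp (m * shf F s p z) ∂(gauss 1)) := by
  apply differentiable_integral_gauss
    (H := fun p z => exp (m * shf F s p z))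
    (continuous_exp.comp ((hF.shf_cont s).const_smul m))
    (fun z => ((hF.shf_diff s z).const_mul m).exp)
  intro p0
  obtain ⟨C, hC0, hC⟩ := hF.loc (‖p0‖ + 1)
  have hb : ∀ p ∈ Metric.ball p0 1, ‖p.1‖ ≤ ‖p0‖ + 1 := by
    intro p hp
    rw [Metric.mem_ball, dist_eq_norm] at hp
    have := norm_le_norm_add_norm_sub p0 p
    have := norm_fst_le p
    rw [norm_sub_rev] at hp
    linarith
  have hp0 := Metric.mem_ball_self (x := p0) one_pos
  set K := exp (m * (F p0.1 p0.2 + C + 1 + 0)) with hK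
  set c := m * (‖s‖ + ‖s‖ * (‖p0‖ + 1)) with hc
  have hup : ∀ p ∈ Metric.ball p0 1, ∀ z, exp (m * shf F s p z) ≤ K * exp (c * |z|) := by
    intro p hp z
    rw [hK, ← exp_add]
    apply exp_le_exp.2
    have h1 := hF.shf_le s hC p p0 (hb p hp) (hb p0 hp0) z
    have h2 := (abs_le.1 (hF.shf_abs s p0 (hb p0 hp0) z)).2
    rw [Metric.mem_ball, dist_eq_norm] at hp
    have n1 : ‖p.1 - p0.1‖ ≤ ‖p - p0‖ := norm_fst_le (p - p0)
    have n2 : |p.2 - p0.2| ≤ ‖p - p0‖ := norm_snd_le (p - p0)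
    have n3 : ‖p.1 - p0.1‖ ≤ 1 := by linarith
    have a1 : C * ‖p.1 - p0.1‖ ≤ C * 1 := by gcongr
    have a2 : ‖s‖ * ‖p.1 - p0.1‖ * |z| ≤ ‖s‖ * 1 * |z| := by gcongr
    have : shf F s p z ≤ (F p0.1 p0.2 + C + 1 + 0) + (‖s‖ + ‖s‖ * (‖p0‖ + 1)) * |z| := by
      linarith
    rw [hc]
    calc _ ≤ m * ((F p0.1 p0.2 + C + 1 + 0) + (‖s‖ + ‖s‖ * (‖p0‖ + 1)) * |z|) := by gcongr
      _ = _ := by ring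
  have hKp : 0 < K := exp_pos _
  refine ⟨K * (1 + m * (C + 1 + ‖s‖)), c + 1, ?_, ?_⟩
  · intro z
    rw [abs_of_pos (exp_pos _)]
    refine (hup p0 hp0 z).trans ?_
    have h1 : exp (c * |z|) ≤ exp ((c + 1) * |z|) := by
      apply exp_le_exp.2; nlinarith [abs_nonneg z]
    have h2 : 0 ≤ K * (m * (C + 1 + ‖s‖)) * exp ((c + 1) * |z|) := by positivity
    nlinarith
  · intro p hp p' hp' z
    have h1 := hF.shf_le s hC p p' (hb p hp) (hb p' hp') z
    have h2 := abs_le_exp_abs z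
    have h3 : (1:ℝ) ≤ exp |z| := one_le_exp (abs_nonneg _)
    have n1 : ‖p.1 - p'.1‖ ≤ ‖p - p'‖ := norm_fst_le (p - p')
    have n2 : |p.2 - p'.2| ≤ ‖p - p'‖ := norm_snd_le (p - p')
    have a1 : C * ‖p.1 - p'.1‖ ≤ C * (exp |z| * ‖p - p'‖) := by
      gcongr
      nlinarith [norm_nonneg (p - p')]
    have a2 : |p.2 - p'.2| ≤ exp |z| * ‖p - p'‖ := by
      nlinarith [norm_nonneg (p - p')]
    have a3 : ‖s‖ * ‖p.1 - p'.1‖ * |z| ≤ ‖s‖ * ‖p - p'‖ * exp |z| := by gcongr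
    have a4 : shf F s p z - shf F s p' z ≤ (C + 1 + ‖s‖) * (exp |z| * ‖p - p'‖) := by linarith
    have h5 := exp_sub_le (m * shf F s p z) (m * shf F s p' z)
    have h6 := hup p hp z
    refine h5.trans (add_le_add le_rfl ?_)
    have h7 : m * shf F s p z - m * shf F s p' z ≤
        m * ((C + 1 + ‖s‖) * (exp |z| * ‖p - p'‖)) := by
      rw [← mul_sub]; gcongr
    calc _ ≤ m * ((C + 1 + ‖s‖) * (exp |z| * ‖p - p'‖)) * exp (m * shf F s p z) := by
          gcongr
      _ ≤ m * ((C + 1 + ‖s‖) * (exp |z| * ‖p - p'‖)) * (K * exp (c * |z|)) := by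
          gcongr
      _ = K * (m * (C + 1 + ‖s‖)) * (exp |z| * exp (c * |z|)) * ‖p - p'‖ := by ring
      _ = K * (m * (C + 1 + ‖s‖)) * exp ((c + 1) * |z|) * ‖p - p'‖ := by
          rw [← exp_add]; ring_nf
      _ ≤ _ := by
          have h8 : m * (C + 1 + ‖s‖) ≤ 1 + m * (C + 1 + ‖s‖) := by linarith
          gcongr

lemma TT_eq_shf {k : ℕ} {F : (Fin k → ℝ) → ℝ → ℝ} (hF : Good F)
    (s : (Fin k → ℝ) →L[ℝ] ℝ) (m : ℝ) (σ : Fin k → ℝ) (x : ℝ) :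
    TT m ((s σ) ^ 2) (F σ) x = (1 / m) * Real.log (∫ z, exp (m * shf F s (σ, x) z) ∂(gauss 1)) := by
  unfold TT
  have hc := (hF.lip σ).continuous
  rw [integral_gauss_sq _ (by fun_prop)]
  rfl

lemma shf_integrable {k : ℕ} {F : (Fin k → ℝ) → ℝ → ℝ} (hF : Good F)
    (s : (Fin k → ℝ) →L[ℝ] ℝ) (m : ℝ) (p : (Fin k → ℝ) × ℝ) :
    Integrable (fun z => exp (m * shf F s p z)) (gauss 1) := by
  have hc : Continuous (shf F s p) :=
    (hF.shf_cont s).comp (by fun_prop : Continuous fun z => (p, z))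
  refine integrable_of_exp_bound (C := exp (m * F p.1 p.2)) (c := |m| * (‖s‖ * ‖p.1‖))
    (by fun_prop) ?_
  intro z
  rw [abs_of_pos (exp_pos _), ← exp_add]
  apply exp_le_exp.2
  have h1 := hF.shf_abs s p le_rfl z
  have : m * (shf F s p z - F p.1 p.2) ≤ |m| * (‖s‖ * ‖p.1‖ * |z|) := by
    calc _ ≤ |m * (shf F s p z - F p.1 p.2)| := le_abs_self _
      _ = |m| * |shf F s p z - F p.1 p.2| := abs_mul _ _
      _ ≤ _ := by gcongr
  linarith

lemma Good.TT_good {k : ℕ} {F : (Fin k → ℝ) → ℝ → ℝ} (hF : Good F)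
    (s : (Fin k → ℝ) →L[ℝ] ℝ) {m : ℝ} (hm : 0 < m) :
    Good (fun σ => TT m ((s σ) ^ 2) (F σ)) where
  lip σ := TT_lip (hF.lip σ) hm _
  diff := by
    have : (fun p : (Fin k → ℝ) × ℝ => TT m ((s p.1) ^ 2) (F p.1) p.2) =
        fun p => (1 / m) * Real.log (∫ z, exp (m * shf F s p z) ∂(gauss 1)) := by
      funext p; exact TT_eq_shf hF s m p.1 p.2
    rw [this]
    refine ((hF.exp_int_diff s hm).log ?_).const_mul _
    intro p
    exact (integral_exp_pos (shf_integrable hF s m p)).ne'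
  loc := by
    intro R
    obtain ⟨C, hC0, hC⟩ := hF.loc R
    set S := m * (‖s‖ * R) with hS
    set D := ∫ z, exp (-S * |z|) ∂(gauss 1) with hD
    have hDpos : 0 < D := integral_exp_pos (integrable_exp_abs 1 (-S))
    set K := m * (C + ‖s‖) * exp (m * (2 * R * C)) with hK
    have hKn : 0 ≤ K := by positivity
    set N := ∫ z, K * exp ((S + 1) * |z|) ∂(gauss 1) with hN
    have hNn : 0 ≤ N := integral_nonneg (fun z => by positivity)
    refine ⟨(1 / m) * (N / D), by positivity, ?_⟩
    intro σ σ' h h' x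
    rw [TT_eq_shf hF, TT_eq_shf hF]
    set Z := ∫ z, exp (m * shf F s (σ, x) z) ∂(gauss 1) with hZ
    set Z' := ∫ z, exp (m * shf F s (σ', x) z) ∂(gauss 1) with hZ'
    have hZp : 0 < Z := integral_exp_pos (shf_integrable hF s m _)
    have hZp' : 0 < Z' := integral_exp_pos (shf_integrable hF s m _)
    have hlow : exp (m * F σ' x) * D ≤ Z' := by
      rw [hD, ← integral_const_mul]
      apply integral_mono ((integrable_exp_abs 1 (-S)).const_mul _) (shf_integrable hF s m _)
      intro z
      simp only
      rw [← exp_add]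
      apply exp_le_exp.2
      have h2 := (abs_le.1 (hF.shf_abs s (σ', x) h' z)).1
      simp only at h2
      have h3 : m * (-(‖s‖ * R * |z|)) ≤ m * (shf F s (σ', x) z - F σ' x) := by gcongr
      rw [hS]; linarith
    have hR0 : 0 ≤ R := (norm_nonneg _).trans h
    have hup : Z ≤ Z' + exp (m * F σ' x) * N * ‖σ - σ'‖ := by
      have e : Z' + exp (m * F σ' x) * N * ‖σ - σ'‖ =
          ∫ z, (exp (m * shf F s (σ', x) z) +
            exp (m * F σ' x) * (K * exp ((S + 1) * |z|)) * ‖σ - σ'‖) ∂(gauss 1) := by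
        rw [integral_add (shf_integrable hF s m _)
          ((((integrable_exp_abs 1 (S + 1)).const_mul K).const_mul _).mul_const _),
          integral_mul_const, integral_const_mul]
      rw [e]
      apply integral_mono (shf_integrable hF s m _) ((shf_integrable hF s m _).add
          ((((integrable_exp_abs 1 (S + 1)).const_mul K).const_mul _).mul_const _))
      intro z
      simp only
      refine (exp_sub_le _ (m * shf F s (σ', x) z)).trans (add_le_add le_rfl ?_)
      have h1 := hF.shf_le s hC (σ, x) (σ', x) h h' z
      simp only [sub_self, abs_zero, add_zero] at h1
      have h2 := abs_le_exp_abs z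
      have h3 : (1:ℝ) ≤ exp |z| := one_le_exp (abs_nonneg _)
      have a1 : C * ‖σ - σ'‖ * 1 ≤ C * ‖σ - σ'‖ * exp |z| := by gcongr
      have a2 : ‖s‖ * ‖σ - σ'‖ * |z| ≤ ‖s‖ * ‖σ - σ'‖ * exp |z| := by gcongr
      have a3 : shf F s (σ, x) z - shf F s (σ', x) z ≤ (C + ‖s‖) * (exp |z| * ‖σ - σ'‖) := by
        linarith
      have h7 : m * shf F s (σ, x) z - m * shf F s (σ', x) z ≤
          m * ((C + ‖s‖) * (exp |z| * ‖σ - σ'‖)) := by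
        rw [← mul_sub]; gcongr
      have h8 : exp (m * shf F s (σ, x) z) ≤
          exp (m * F σ' x) * exp (m * (2 * R * C)) * exp (S * |z|) := by
        rw [← exp_add, ← exp_add]
        apply exp_le_exp.2
        have b1 := (abs_le.1 (hF.shf_abs s (σ, x) h z)).2
        have b2 := hC σ σ' h h' x
        have b3 : ‖σ - σ'‖ ≤ 2 * R := (norm_sub_le _ _).trans (by linarith)
        have b4 : C * ‖σ - σ'‖ ≤ C * (2 * R) := by gcongr
        simp only at b1
        have b5 : shf F s (σ, x) z ≤ F σ' x + 2 * R * C + ‖s‖ * R * |z| := by linarith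
        rw [hS]
        calc _ ≤ m * (F σ' x + 2 * R * C + ‖s‖ * R * |z|) := by gcongr
          _ = _ := by ring
      calc _ ≤ m * ((C + ‖s‖) * (exp |z| * ‖σ - σ'‖)) * exp (m * shf F s (σ, x) z) := by gcongr
        _ ≤ m * ((C + ‖s‖) * (exp |z| * ‖σ - σ'‖)) *
            (exp (m * F σ' x) * exp (m * (2 * R * C)) * exp (S * |z|)) := by gcongr
        _ = exp (m * F σ' x) * (K * (exp (S * |z|) * exp |z|)) * ‖σ - σ'‖ := by rw [hK]; ring
        _ = _ := by rw [← exp_add]; ring_nf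
    have hlog : Real.log Z - Real.log Z' ≤ N / D * ‖σ - σ'‖ := by
      rw [← Real.log_div hZp.ne' hZp'.ne']
      refine (Real.log_le_sub_one_of_pos (div_pos hZp hZp')).trans ?_
      rw [sub_le_iff_le_add, div_le_iff₀ hZp']
      refine hup.trans ?_
      have : exp (m * F σ' x) * N * ‖σ - σ'‖ ≤ N / D * ‖σ - σ'‖ * Z' := by
        calc _ = N / D * ‖σ - σ'‖ * (exp (m * F σ' x) * D) := by field_simp
          _ ≤ _ := by gcongr
      linarith
    have h1m : 0 < 1 / m := by positivity
    have := mul_le_mul_of_nonneg_left hlog h1m.le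
    linarith

lemma LC_good (k : ℕ) : Good (fun (_ : Fin k → ℝ) => LC) where
  lip _ := LC_lip
  diff := by
    have h1 : Differentiable ℝ LC :=
      Real.differentiable_cosh.log (fun x => (cosh_pos x).ne')
    exact h1.comp differentiable_snd
  loc R := ⟨0, le_rfl, fun _ _ _ _ _ => by simp⟩

/-- coordinate functionals (zero outside of the range) -/
def crd (k l : ℕ) : (Fin k → ℝ) →L[ℝ] ℝ :=
  if h : l < k then ContinuousLinearMap.proj ⟨l, h⟩ else 0

lemma parisiB_good {m : ℕ → ℝ} {k n : ℕ} (hm : ∀ l, 1 ≤ l → l ≤ k → 0 < m l) :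
    ∀ j, j ≤ k → Good (fun σ : Fin n → ℝ => parisiB m (fun l => (crd n l σ) ^ 2) k j)
  | 0, _ => LC_good n
  | j + 1, hj => by
      have h1 := (parisiB_good (n := n) hm j (by omega)).TT_good (crd n (k - j))
        (hm (k - j) (by omega) (by omega))
      exact h1

lemma Phi_diff {m : ℕ → ℝ} {k : ℕ} (n : ℕ) (hm : ∀ l, 1 ≤ l → l ≤ k → 0 < m l) (h : ℝ) :
    Differentiable ℝ (fun σ : Fin n → ℝ => Phi m k h (fun l => (crd n l σ) ^ 2)) := by
  have hG := parisiB_good (n := n) hm k le_rfl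
  have h1 := (hG.int_diff (crd n 0)).comp
    (by fun_prop : Differentiable ℝ fun σ : Fin n → ℝ => (σ, h))
  have e : (fun σ : Fin n → ℝ => Phi m k h (fun l => (crd n l σ) ^ 2)) =
      (fun p => ∫ z, shf (fun σ => parisiB m (fun l => (crd n l) σ ^ 2) k k) (crd n 0) p z
        ∂(gauss 1)) ∘ fun σ => (σ, h) := by
    funext σ
    unfold Phi
    have hc := (hG.lip σ).continuous
    rw [integral_gauss_sq _ (by fun_prop)]
    rfl
  rw [e]
  exact h1

lemma Phi_chain {m : ℕ → ℝ} {k : ℕ} (hm : ∀ l, 1 ≤ l → l ≤ k → 0 < m l) (h : ℝ) (σ0 : ℕ → ℝ) :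
    ∃ g : ℕ → ℝ, ∀ (σ : ℝ → ℕ → ℝ) (σ' : ℕ → ℝ) (t0 : ℝ), (∀ l, l < k → σ t0 l = σ0 l) →
      (∀ l, l < k → HasDerivAt (fun t => σ t l) (σ' l) t0) →
      HasDerivAt (fun t => Phi m k h (Function.update (fun l => (σ t l) ^ 2) k 0))
        (∑ l ∈ Finset.range k, g l * σ' l) t0 := by
  set f : (Fin k → ℝ) → ℝ := fun σ => Phi m k h (fun l => (crd k l σ) ^ 2) with hf
  have hd : Differentiable ℝ f := Phi_diff k hm h
  set L := fderiv ℝ f (fun i => σ0 i) with hL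
  refine ⟨fun l => if hl : l < k then L (Pi.single ⟨l, hl⟩ 1) else 0, ?_⟩
  intro σ σ' t0 h0 h1
  have hcurve : HasDerivAt (fun t => (fun i : Fin k => σ t i)) (fun i : Fin k => σ' i) t0 := by
    rw [hasDerivAt_pi]
    intro i
    exact h1 i i.2
  have hbase : (fun i : Fin k => σ t0 i) = fun i : Fin k => σ0 i := by
    funext i; exact h0 i i.2
  have hF : HasFDerivAt f L ((fun t => (fun i : Fin k => σ t i)) t0) := by
    simp only
    rw [hbase]
    exact (hd _).hasFDerivAt
  have key := hF.comp_hasDerivAt t0 hcurve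
  have e1 : L (fun i : Fin k => σ' i) =
      ∑ l ∈ Finset.range k, (if hl : l < k then L (Pi.single ⟨l, hl⟩ 1) else 0) * σ' l := by
    rw [Finset.sum_range]
    have : (fun i : Fin k => σ' i) = ∑ i : Fin k, σ' i • (Pi.single i (1:ℝ) : Fin k → ℝ) := by
      funext j
      simp [Finset.sum_apply, Pi.single_apply]
    rw [this, map_sum]
    apply Finset.sum_congr rfl
    intro i _
    simp [mul_comm]
  rw [e1] at key
  refine key.congr_of_eventuallyEq (Eventually.of_forall fun t => ?_)
  simp only [Function.comp, hf]
  apply Phi_congr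
  intro l hl
  rcases eq_or_lt_of_le hl with rfl | hlt
  · simp [crd]
  · rw [Function.update_of_ne hlt.ne]
    simp [crd, hlt]

lemma Phi_chain_var {m : ℕ → ℝ} {k : ℕ} (hm : ∀ l, 1 ≤ l → l ≤ k → 0 < m l) (h : ℝ)
    (v0 : ℕ → ℝ) (hv0 : ∀ l, l < k → 0 ≤ v0 l) :
    ∃ c : ℕ → ℝ, ∀ (v : ℝ → ℕ → ℝ) (v' : ℕ → ℝ) (t0 : ℝ), (∀ l, l < k → v t0 l = v0 l) →
      (∀ l, l < k → HasDerivAt (fun t => v t l) (v' l) t0) →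
      (∀ l, l < k → v0 l = 0 → ∀ t, v t l = 0) →
      HasDerivAt (fun t => Phi m k h (Function.update (v t) k 0))
        (∑ l ∈ Finset.range k, c l * v' l) t0 := by
  obtain ⟨g, hg⟩ := Phi_chain hm h (fun l => √(v0 l))
  refine ⟨fun l => g l / (2 * √(v0 l)), ?_⟩
  intro v v' t0 h0 h1 h2
  have key := hg (fun t l => √(v t l)) (fun l => v' l / (2 * √(v0 l))) t0
    (fun l hl => by rw [h0 l hl]) (fun l hl => by
      by_cases hz : v0 l = 0
      · simp only [h2 l hl hz, sqrt_zero, hz, mul_zero, div_zero]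
        exact hasDerivAt_const _ _
      · have := (h1 l hl).sqrt (by rw [h0 l hl]; exact hz)
        rw [h0 l hl] at this
        exact this)
  have e : ∑ l ∈ Finset.range k, g l * (v' l / (2 * √(v0 l))) =
      ∑ l ∈ Finset.range k, g l / (2 * √(v0 l)) * v' l :=
    Finset.sum_congr rfl (fun l _ => by ring)
  rw [e] at key
  refine key.congr_of_eventuallyEq ?_
  have hev : ∀ᶠ t in 𝓝 t0, ∀ l ∈ Finset.range k, 0 ≤ v t l := by
    rw [Filter.eventually_all_finset]
    intro l hl
    have hl' := Finset.mem_range.1 hl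
    rcases (hv0 l hl').eq_or_lt with hz | hpos
    · exact Eventually.of_forall fun t => (h2 l hl' hz.symm t).ge
    · have hc := (h1 l hl').continuousAt
      have : ∀ᶠ t in 𝓝 t0, 0 < v t l := hc.eventually (by
        simp only
        rw [h0 l hl']; exact lt_mem_nhds hpos)
      exact this.mono fun t ht => ht.le
  filter_upwards [hev] with t ht
  apply Phi_congr
  intro l hl
  rcases eq_or_lt_of_le hl with rfl | hlt
  · simp
  · rw [Function.update_of_ne hlt.ne, Function.update_of_ne hlt.ne,
      sq_sqrt (ht l (Finset.mem_range.2 hlt))]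

lemma xi'_mono (S : Finset ℕ) (β : ℕ → ℝ) {x y : ℝ} (hx : 0 ≤ x) (hxy : x ≤ y) :
    xiFn' S β x ≤ xiFn' S β y := by
  unfold xiFn'
  gcongr

lemma xi'_nonneg (S : Finset ℕ) (β : ℕ → ℝ) {x : ℝ} (hx : 0 ≤ x) : 0 ≤ xiFn' S β x := by
  unfold xiFn'
  positivity

lemma xi'_strict {S : Finset ℕ} {β : ℕ → ℝ} (hβ : ∃ p ∈ S, 2 ≤ p ∧ β p ≠ 0) {x y : ℝ}
    (hx : 0 ≤ x) (hxy : x < y) : xiFn' S β x < xiFn' S β y := by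
  obtain ⟨p, hp, hp2, hb⟩ := hβ
  unfold xiFn'
  apply Finset.sum_lt_sum
  · intro i _
    gcongr
  · refine ⟨p, hp, ?_⟩
    have h1 : 0 < β p ^ 2 * (p : ℝ) := by
      have : (0:ℝ) < p := by exact_mod_cast (by omega : 0 < p)
      positivity
    apply mul_lt_mul_of_pos_left _ h1
    exact pow_lt_pow_left₀ hxy hx (by omega)

lemma pow_tangent {x a : ℝ} (hx : 0 ≤ x) (ha : 0 ≤ a) (p : ℕ) :
    p * a ^ (p - 1) * (x - a) ≤ x ^ p - a ^ p := by
  induction p with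
  | zero => simp
  | succ n ih =>
    rcases Nat.eq_zero_or_pos n with h0 | hpos
    · subst h0; simp
    · obtain ⟨n', rfl⟩ : ∃ n', n = n' + 1 := ⟨n - 1, by omega⟩
      simp only [Nat.add_sub_cancel] at ih ⊢
      push_cast at ih ⊢
      have h1 := mul_le_mul_of_nonneg_left ih hx
      have h2 : 0 ≤ ((n' : ℝ) + 1) * a ^ n' * (x - a) ^ 2 := by positivity
      have e : x ^ (n' + 1 + 1) - a ^ (n' + 1 + 1) - ((n' : ℝ) + 1 + 1) * a ^ (n' + 1) * (x - a) =
        x * (x ^ (n' + 1) - a ^ (n' + 1)) - x * (((n' : ℝ) + 1) * a ^ n' * (x - a)) +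
          ((n' : ℝ) + 1) * a ^ n' * (x - a) ^ 2 := by ring
      linarith

lemma xi_tangent (S : Finset ℕ) (β : ℕ → ℝ) {x a : ℝ} (hx : 0 ≤ x) (ha : 0 ≤ a) :
    (x - a) * xiFn' S β a ≤ xiFn S β x - xiFn S β a := by
  unfold xiFn' xiFn
  rw [Finset.mul_sum, ← Finset.sum_sub_distrib]
  apply Finset.sum_le_sum
  intro p _
  have := mul_le_mul_of_nonneg_left (pow_tangent hx ha p) (sq_nonneg (β p))
  linarith

lemma theta_le (S : Finset ℕ) (β : ℕ → ℝ) {x a : ℝ} (hx : 0 ≤ x) (ha : 0 ≤ a) :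
    thetaFn S β x - thetaFn S β a ≤ x * (xiFn' S β x - xiFn' S β a) := by
  unfold thetaFn
  have := xi_tangent S β hx ha
  linarith

lemma abel_sum (m t : ℕ → ℝ) (k : ℕ) :
    ∑ l ∈ Finset.Icc 1 k, m l * (t (l + 1) - t l) + ∑ l ∈ Finset.Icc 1 k, (m l - m (l - 1)) * t l =
      m k * t (k + 1) - m 0 * t 1 := by
  induction k with
  | zero => simp
  | succ n ih =>
    rw [Finset.sum_Icc_succ_top (by omega), Finset.sum_Icc_succ_top (by omega)]
    simp only [Nat.add_sub_cancel]
    linarith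

lemma tele_sum (m : ℕ → ℝ) (r k : ℕ) (hr : r ≤ k) :
    ∑ l ∈ Finset.Icc 1 k, (m l - m (l - 1)) * (if r < l then (1:ℝ) else 0) = m k - m r := by
  induction k, hr using Nat.le_induction with
  | base =>
    rw [sub_self]
    apply Finset.sum_eq_zero
    intro l hl
    rw [if_neg (by have := (Finset.mem_Icc.1 hl).2; omega), mul_zero]
  | succ n hn ih =>
    rw [Finset.sum_Icc_succ_top (by omega), ih, if_pos (by omega)]
    simp

lemma op_q_mono {k : ℕ} (op : OrderParam k) {i j : ℕ} (hij : i ≤ j) (hj : j ≤ k + 1) :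
    op.q i ≤ op.q j := by
  induction j, hij using Nat.le_induction with
  | base => exact le_rfl
  | succ n hn ih => exact (ih (by omega)).trans (op.q_mono n (by omega))

lemma op_q_nonneg {k : ℕ} (op : OrderParam k) {i : ℕ} (hi : i ≤ k + 1) : 0 ≤ op.q i := by
  have := op_q_mono op (Nat.zero_le i) hi
  rwa [op.q_zero] at this

lemma op_q_le_one {k : ℕ} (op : OrderParam k) {i : ℕ} (hi : i ≤ k + 1) : op.q i ≤ 1 := by
  have := op_q_mono op hi le_rfl
  rwa [op.q_last] at this

lemma op_m_mono {k : ℕ} (op : OrderParam k) {i j : ℕ} (hij : i ≤ j) (hj : j ≤ k) :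
    op.m i ≤ op.m j := by
  induction j, hij using Nat.le_induction with
  | base => exact le_rfl
  | succ n hn ih => exact (ih (by omega)).trans (op.m_mono n (by omega))

lemma opVar_nonneg (S : Finset ℕ) (β : ℕ → ℝ) {k : ℕ} (op : OrderParam k) {l : ℕ} (hl : l ≤ k) :
    0 ≤ opVar S β op l := by
  unfold opVar
  split_ifs with h
  · exact xi'_nonneg _ _ (op_q_nonneg op (by omega))
  · exact sub_nonneg.2 (xi'_mono _ _ (op_q_nonneg op (by omega)) (op.q_mono l hl))

lemma parisiP_formula (S : Finset ℕ) (h : ℝ) (β : ℕ → ℝ) {k : ℕ} (hk : 1 ≤ k)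
    (op : OrderParam k) :
    parisiP S h β op = xiFn S β 1 / 2 - xiFn' S β (op.q k) / 2 +
      Phi op.m k h (Function.update (opVar S β op) k 0) +
      (1 / 2) * ∑ l ∈ Finset.Icc 1 k, (op.m l - op.m (l - 1)) * thetaFn S β (op.q l) := by
  have h1 : parisiP S h β op = Phi op.m k h (opVar S β op) -
      (1 / 2) * ∑ l ∈ Finset.Icc 1 k,
        op.m l * (thetaFn S β (op.q (l + 1)) - thetaFn S β (op.q l)) := rfl
  have h2 := abel_sum op.m (fun l => thetaFn S β (op.q l)) k
  rw [op.m_zero, op.m_last, op.q_last] at h2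
  have h3 := Phi_strip (v := opVar S β op) op.m_pos hk op.m_last (opVar_nonneg S β op le_rfl) h
  have h4 : opVar S β op k = xiFn' S β 1 - xiFn' S β (op.q k) := by
    unfold opVar
    rw [if_neg (by omega), op.q_last]
  have h5 : thetaFn S β 1 = xiFn' S β 1 - xiFn S β 1 := by unfold thetaFn; ring
  rw [h1, h3, h4]
  linarith

/-- indicator of `q_l = a` -/
def ind (q : ℕ → ℝ) (a : ℝ) (l : ℕ) : ℝ := if q l = a then 1 else 0

/-- direction of motion of the variances when the atom `a` moves -/
def dir (q : ℕ → ℝ) (a : ℝ) (l : ℕ) : ℝ := ind q a (l + 1) - if l = 0 then 0 else ind q a l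

/-- Move the atom `a` to `x`. -/
def moveOp {k : ℕ} (hk : 1 ≤ k) (op : OrderParam k) (a x : ℝ) (hx0 : 0 ≤ x) (hx1 : x ≤ 1)
    (hx : ∀ l ∈ Finset.range (k + 2), (a < op.q l → x ≤ op.q l) ∧ (op.q l < a → op.q l ≤ x)) :
    OrderParam k where
  m := op.m
  q := fun l => if (1 ≤ l ∧ l ≤ k) ∧ op.q l = a then x else op.q l
  m_zero := op.m_zero
  m_last := op.m_last
  m_mono := op.m_mono
  m_pos := op.m_pos
  q_zero := by simp [op.q_zero]
  q_last := by simp [op.q_last]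
  q_mono := by
    intro l hl
    have hm := op.q_mono l hl
    have h1 := hx l (Finset.mem_range.2 (by omega))
    have h2 := hx (l + 1) (Finset.mem_range.2 (by omega))
    by_cases c1 : (1 ≤ l ∧ l ≤ k) ∧ op.q l = a
    · rw [if_pos c1]
      by_cases c2 : (1 ≤ l + 1 ∧ l + 1 ≤ k) ∧ op.q (l + 1) = a
      · rw [if_pos c2]
      · rw [if_neg c2]
        rcases eq_or_lt_of_le hl with e | hlt
        · rw [e, op.q_last]; exact hx1
        · apply h2.1
          rcases hm.eq_or_lt with e | hlt'
          · exact absurd ⟨⟨by omega, by omega⟩, by rw [← e]; exact c1.2⟩ c2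
          · rw [← c1.2]; exact hlt'
    · rw [if_neg c1]
      by_cases c2 : (1 ≤ l + 1 ∧ l + 1 ≤ k) ∧ op.q (l + 1) = a
      · rw [if_pos c2]
        rcases Nat.eq_zero_or_pos l with e | hpos
        · rw [e, op.q_zero]; exact hx0
        · apply h1.2
          rcases hm.eq_or_lt with e | hlt'
          · exact absurd ⟨⟨by omega, by omega⟩, by rw [e]; exact c2.2⟩ c1
          · rw [← c2.2]; exact hlt'
      · rw [if_neg c2]; exact hm

/-- the one-parameter deformation -/
def gFn (S : Finset ℕ) (h : ℝ) (β : ℕ → ℝ) {k : ℕ} (op : OrderParam k) (a t : ℝ) : ℝ :=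
  Phi op.m k h (Function.update (fun l => opVar S β op l + t * dir op.q a l) k 0) -
    t * ind op.q a k / 2

/-- mass of the atom `a` -/
def mass {k : ℕ} (op : OrderParam k) (a : ℝ) : ℝ :=
  ∑ l ∈ Finset.Icc 1 k, (op.m l - op.m (l - 1)) * ind op.q a l

lemma mass_nonneg {k : ℕ} (op : OrderParam k) (a : ℝ) : 0 ≤ mass op a := by
  apply Finset.sum_nonneg
  intro l hl
  obtain ⟨h1, h2⟩ := Finset.mem_Icc.1 hl
  apply mul_nonneg
  · exact sub_nonneg.2 (op_m_mono op (by omega) h2)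
  · unfold ind; split_ifs <;> norm_num

lemma parisiP_move (S : Finset ℕ) (h : ℝ) (β : ℕ → ℝ) {k : ℕ} (hk : 1 ≤ k) (op : OrderParam k)
    (a x : ℝ) (hx0 : 0 ≤ x) (hx1 : x ≤ 1)
    (hx : ∀ l ∈ Finset.range (k + 2), (a < op.q l → x ≤ op.q l) ∧ (op.q l < a → op.q l ≤ x)) :
    parisiP S h β (moveOp hk op a x hx0 hx1 hx) - parisiP S h β op =
      gFn S h β op a (xiFn' S β x - xiFn' S β a) - gFn S h β op a 0 +
        mass op a * (thetaFn S β x - thetaFn S β a) / 2 := by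
  set op' := moveOp hk op a x hx0 hx1 hx with hop
  set t := xiFn' S β x - xiFn' S β a with ht
  have hq : ∀ l, 1 ≤ l → l ≤ k → op'.q l = if op.q l = a then x else op.q l := by
    intro l h1 h2
    simp only [hop, moveOp]
    congr 1
    simp [h1, h2]
  have hxi : ∀ l, 1 ≤ l → l ≤ k →
      xiFn' S β (op'.q l) = xiFn' S β (op.q l) + t * ind op.q a l := by
    intro l h1 h2
    rw [hq l h1 h2]
    unfold ind
    split_ifs with c
    · rw [c, ht]; ring
    · ring
  have hth : ∀ l, 1 ≤ l → l ≤ k →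
      thetaFn S β (op'.q l) = thetaFn S β (op.q l) +
        (thetaFn S β x - thetaFn S β a) * ind op.q a l := by
    intro l h1 h2
    rw [hq l h1 h2]
    unfold ind
    split_ifs with c
    · rw [c]; ring
    · ring
  have hsum : ∑ l ∈ Finset.Icc 1 k, (op'.m l - op'.m (l - 1)) * thetaFn S β (op'.q l) =
      ∑ l ∈ Finset.Icc 1 k, (op.m l - op.m (l - 1)) * thetaFn S β (op.q l) +
        mass op a * (thetaFn S β x - thetaFn S β a) := by
    unfold mass
    rw [Finset.sum_mul, ← Finset.sum_add_distrib]
    apply Finset.sum_congr rfl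
    intro l hl
    obtain ⟨h1, h2⟩ := Finset.mem_Icc.1 hl
    rw [hth l h1 h2]
    have : op'.m = op.m := rfl
    rw [this]; ring
  have hPhi : Phi op'.m k h (Function.update (opVar S β op') k 0) =
      Phi op.m k h (Function.update (fun l => opVar S β op l + t * dir op.q a l) k 0) := by
    apply Phi_congr
    intro l hl
    rcases eq_or_lt_of_le hl with rfl | hlt
    · simp
    · rw [Function.update_of_ne hlt.ne, Function.update_of_ne hlt.ne]
      unfold opVar dir
      split_ifs with c
      · rw [c, zero_add, hxi 1 le_rfl hk]; ring
      · rw [hxi (l + 1) (by omega) (by omega), hxi l (by omega) (by omega)]; ring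
  rw [parisiP_formula S h β hk, parisiP_formula S h β hk, hsum, hPhi, hxi k hk le_rfl]
  unfold gFn
  simp only [zero_mul, add_zero, zero_div, sub_zero]
  ring

lemma deriv_le_of_right {g : ℝ → ℝ} {E c : ℝ} (hg : HasDerivAt g E 0)
    (h : ∀ᶠ t in 𝓝[>] (0:ℝ), g t ≤ g 0 + c * t) : E ≤ c := by
  have h1 : Tendsto (slope g 0) (𝓝[>] (0:ℝ)) (𝓝 E) := hg.tendsto_slope.mono_left
    (nhdsWithin_mono (0:ℝ) (fun t (ht : t ∈ Set.Ioi (0:ℝ)) => (ne_of_gt ht : t ≠ 0)))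
  refine le_of_tendsto h1 ?_
  filter_upwards [h, self_mem_nhdsWithin] with t ht ht0
  have ht0' : (0:ℝ) < t := ht0
  rw [slope_def_field, sub_zero, div_le_iff₀ ht0']
  linarith

lemma deriv_ge_of_right {g : ℝ → ℝ} {E c : ℝ} (hg : HasDerivAt g E 0)
    (h : ∀ᶠ t in 𝓝[>] (0:ℝ), g 0 + c * t ≤ g t) : c ≤ E := by
  have h1 : Tendsto (slope g 0) (𝓝[>] (0:ℝ)) (𝓝 E) := hg.tendsto_slope.mono_left
    (nhdsWithin_mono (0:ℝ) (fun t (ht : t ∈ Set.Ioi (0:ℝ)) => (ne_of_gt ht : t ≠ 0)))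
  refine ge_of_tendsto h1 ?_
  filter_upwards [h, self_mem_nhdsWithin] with t ht ht0
  have ht0' : (0:ℝ) < t := ht0
  rw [slope_def_field, sub_zero, le_div_iff₀ ht0']
  linarith

lemma xi'_cont (S : Finset ℕ) (β : ℕ → ℝ) : Continuous (xiFn' S β) := by
  unfold xiFn'
  fun_prop

section minimizer

variable {S : Finset ℕ} {h : ℝ} {β : ℕ → ℝ} {k : ℕ} {op : OrderParam k}

lemma move_eventually (op : OrderParam k) (a : ℝ) :
    ∀ᶠ x in 𝓝 a, ∀ l ∈ Finset.range (k + 2),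
      (a < op.q l → x ≤ op.q l) ∧ (op.q l < a → op.q l ≤ x) := by
  rw [Filter.eventually_all_finset]
  intro l _
  refine Filter.Eventually.and ?_ ?_
  · by_cases c : a < op.q l
    · exact (gt_mem_nhds c).mono fun x hx _ => le_of_lt hx
    · exact Eventually.of_forall fun x hx => absurd hx c
  · by_cases c : op.q l < a
    · exact (lt_mem_nhds c).mono fun x hx _ => hx.le
    · exact Eventually.of_forall fun x hx => absurd hx c

lemma stat_ge (hβ : ∃ p ∈ S, 2 ≤ p ∧ β p ≠ 0) (hk : 1 ≤ k)
    (hmin : ∀ op' : OrderParam k, parisiP S h β op ≤ parisiP S h β op')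
    {a E : ℝ} (ha0 : 0 ≤ a) (ha1 : a < 1) (hg : HasDerivAt (gFn S h β op a) E 0) :
    -(mass op a * a / 2) ≤ E := by
  set τ : ℝ → ℝ := fun x => xiFn' S β x - xiFn' S β a with hτ
  have hτt : Tendsto τ (𝓝[>] a) (𝓝[≠] 0) := by
    apply tendsto_nhdsWithin_iff.2
    constructor
    · have : Tendsto τ (𝓝 a) (𝓝 (τ a)) :=
        ((xi'_cont S β).sub continuous_const).tendsto a
      rw [show τ a = 0 by simp [hτ]] at this
      exact this.mono_left nhdsWithin_le_nhds
    · filter_upwards [self_mem_nhdsWithin] with x hx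
      exact (sub_pos.2 (xi'_strict hβ ha0 hx)).ne'
  have h1 := hg.tendsto_slope.comp hτt
  have h2 : Tendsto (fun x => -(mass op a * x / 2)) (𝓝[>] a) (𝓝 (-(mass op a * a / 2))) := by
    have : Continuous fun x : ℝ => -(mass op a * x / 2) := by fun_prop
    exact (this.tendsto a).mono_left nhdsWithin_le_nhds
  refine le_of_tendsto_of_tendsto h2 h1 ?_
  filter_upwards [self_mem_nhdsWithin, nhdsWithin_le_nhds (gt_mem_nhds ha1),
    nhdsWithin_le_nhds (move_eventually op a)] with x hxa hx1 hx
  have hxa' : a < x := hxa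
  have hx0 : 0 ≤ x := ha0.trans hxa'.le
  have hp := hmin (moveOp hk op a x hx0 hx1.le hx)
  have hd := parisiP_move S h β hk op a x hx0 hx1.le hx
  have hth := mul_le_mul_of_nonneg_left (theta_le S β hx0 ha0) (mass_nonneg op a)
  have htp : 0 < τ x := sub_pos.2 (xi'_strict hβ ha0 hxa')
  simp only [Function.comp]
  rw [slope_def_field, sub_zero, le_div_iff₀ htp]
  simp only [hτ]
  linarith

lemma stat_le (hβ : ∃ p ∈ S, 2 ≤ p ∧ β p ≠ 0) (hk : 1 ≤ k)
    (hmin : ∀ op' : OrderParam k, parisiP S h β op ≤ parisiP S h β op')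
    {a E : ℝ} (ha0 : 0 < a) (ha1 : a ≤ 1) (hg : HasDerivAt (gFn S h β op a) E 0) :
    E ≤ -(mass op a * a / 2) := by
  set τ : ℝ → ℝ := fun x => xiFn' S β x - xiFn' S β a with hτ
  have hτt : Tendsto τ (𝓝[<] a) (𝓝[≠] 0) := by
    apply tendsto_nhdsWithin_iff.2
    constructor
    · have : Tendsto τ (𝓝 a) (𝓝 (τ a)) :=
        ((xi'_cont S β).sub continuous_const).tendsto a
      rw [show τ a = 0 by simp [hτ]] at this
      exact this.mono_left nhdsWithin_le_nhds
    · filter_upwards [self_mem_nhdsWithin, nhdsWithin_le_nhds (lt_mem_nhds ha0)] with x hx hx0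
      exact (sub_neg.2 (xi'_strict hβ hx0.le hx)).ne
  have h1 := hg.tendsto_slope.comp hτt
  have h2 : Tendsto (fun x => -(mass op a * x / 2)) (𝓝[<] a) (𝓝 (-(mass op a * a / 2))) := by
    have : Continuous fun x : ℝ => -(mass op a * x / 2) := by fun_prop
    exact (this.tendsto a).mono_left nhdsWithin_le_nhds
  refine le_of_tendsto_of_tendsto h1 h2 ?_
  filter_upwards [self_mem_nhdsWithin, nhdsWithin_le_nhds (lt_mem_nhds ha0),
    nhdsWithin_le_nhds (move_eventually op a)] with x hxa hx0 hx
  have hxa' : x < a := hxa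
  have hx1 : x ≤ 1 := hxa'.le.trans ha1
  have hp := hmin (moveOp hk op a x hx0.le hx1 hx)
  have hd := parisiP_move S h β hk op a x hx0.le hx1 hx
  have hth := mul_le_mul_of_nonneg_left (theta_le S β hx0.le ha0.le) (mass_nonneg op a)
  have htp : τ x < 0 := sub_neg.2 (xi'_strict hβ hx0.le hxa')
  simp only [Function.comp]
  rw [slope_def_field, sub_zero, div_le_iff_of_neg htp]
  simp only [hτ]
  linarith

end minimizer


section stationarity

variable {S : Finset ℕ} {h : ℝ} {β : ℕ → ℝ} {k : ℕ} {op : OrderParam k}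

lemma zero_block_le (hβ : ∃ p ∈ S, 2 ≤ p ∧ β p ≠ 0) (hk : 1 ≤ k) (hq1 : op.q 1 = 0) {E : ℝ}
    (hg : HasDerivAt (gFn S h β op 0) E 0) : E ≤ 0 := by
  classical
  obtain ⟨r, hr1, hrk, hr⟩ : ∃ r, 1 ≤ r ∧ r ≤ k ∧ ∀ l, l ≤ k + 1 → (op.q l = 0 ↔ l ≤ r) := by
    refine ⟨Nat.findGreatest (fun l => op.q l = 0) k, Nat.le_findGreatest hk hq1,
      Nat.findGreatest_le k, ?_⟩
    intro l hl
    have hs : op.q (Nat.findGreatest (fun l => op.q l = 0) k) = 0 :=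
      Nat.findGreatest_spec (P := fun l => op.q l = 0) hk hq1
    constructor
    · intro h0
      rcases eq_or_lt_of_le hl with e | hlt
      · rw [e, op.q_last] at h0; norm_num at h0
      · exact Nat.le_findGreatest (by omega) h0
    · intro h0
      have := Nat.findGreatest_le (P := fun l => op.q l = 0) k
      apply le_antisymm _ (op_q_nonneg op hl)
      rw [← hs]
      exact op_q_mono op h0 (by omega)
  have hind : ∀ l, l ≤ k + 1 → ind op.q 0 l = if l ≤ r then 1 else 0 := by
    intro l hl
    unfold ind
    simp only [hr l hl]
  have hvr : 0 < opVar S β op r := by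
    unfold opVar
    rw [if_neg (by omega)]
    apply sub_pos.2
    apply xi'_strict hβ (op_q_nonneg op (by omega))
    rw [(hr r (by omega)).2 le_rfl]
    apply lt_of_le_of_ne (op_q_nonneg op (by omega))
    intro e
    have := (hr (r + 1) (by omega)).1 e.symm
    omega
  have hdir0 : dir op.q 0 0 = 1 := by
    unfold dir
    rw [hind _ (by omega)]
    simp [hr1]
  have hdirr : dir op.q 0 r = -1 := by
    unfold dir
    rw [hind _ (by omega), hind _ (by omega), if_neg (by omega), if_neg (by omega), if_pos le_rfl]
    norm_num
  have hdirl : ∀ l, 1 ≤ l → l ≤ k → l ≠ r → dir op.q 0 l = 0 := by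
    intro l h1 h2 h3
    unfold dir
    rw [hind _ (by omega), hind _ (by omega), if_neg (by omega : ¬ l = 0)]
    by_cases c : l ≤ r
    · rw [if_pos (by omega), if_pos c]; norm_num
    · rw [if_neg (by omega), if_neg c]; norm_num
  have hdirk : dir op.q 0 k = - ind op.q 0 k := by
    unfold dir
    rw [hind (k + 1) (by omega), if_neg (by omega), if_neg (by omega)]
    ring
  have key : ∀ t, 0 ≤ t → t ≤ opVar S β op r → gFn S h β op 0 t =
      Phi op.m k h (fun l => opVar S β op l + t * dir op.q 0 l) - opVar S β op k / 2 := by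
    intro t ht0 ht
    have hnn : 0 ≤ (fun l => opVar S β op l + t * dir op.q 0 l) k := by
      by_cases c : k = r
      · simp only [c, hdirr]; linarith
      · simp only [hdirl k hk le_rfl c]
        have := opVar_nonneg S β op (le_refl k)
        linarith
    have := Phi_strip (v := fun l => opVar S β op l + t * dir op.q 0 l) op.m_pos hk op.m_last hnn h
    rw [this]
    unfold gFn
    simp only [hdirk]
    ring
  apply deriv_le_of_right hg
  filter_upwards [self_mem_nhdsWithin, nhdsWithin_le_nhds (gt_mem_nhds hvr)] with t ht0 ht1
  have ht0' : (0:ℝ) < t := ht0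
  have ht1' : t < opVar S β op r := ht1
  rw [key t ht0'.le ht1'.le, key 0 le_rfl hvr.le]
  have := Phi_zero_block (v := fun l => opVar S β op l + 0 * dir op.q 0 l)
    (v' := fun l => opVar S β op l + t * dir op.q 0 l) op.m_pos hr1 hrk ht0'.le
    (by simpa using ht1'.le) (by simpa using opVar_nonneg S β op (Nat.zero_le k))
    (by
      intro l h1 h2
      have e1 := (hr l (by omega)).2 (by omega)
      have e2 := (hr (l + 1) (by omega)).2 (by omega)
      simp only [opVar, e1, e2]
      rw [if_neg (by omega)]
      ring)
    (by simp [hdir0]) (by simp [hdirr]; ring)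
    (by intro l h1 h2 h3; simp [hdirl l h1 h2 h3]) h
  linarith

lemma one_block_ge (hk : 1 ≤ k) (hqk : op.q k = 1) {E : ℝ}
    (hg : HasDerivAt (gFn S h β op 1) E 0) : -(mass op 1 * 1 / 2) ≤ E := by
  classical
  obtain ⟨r, hrk, hr⟩ : ∃ r, r < k ∧ ∀ l, l ≤ k + 1 → (op.q l = 1 ↔ r < l) := by
    have h0 : op.q 0 ≠ 1 := by rw [op.q_zero]; norm_num
    have hs : op.q (Nat.findGreatest (fun l => op.q l ≠ 1) k) ≠ 1 :=
      Nat.findGreatest_spec (P := fun l => op.q l ≠ 1) (Nat.zero_le k) h0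
    have hle := Nat.findGreatest_le (P := fun l => op.q l ≠ 1) k
    refine ⟨Nat.findGreatest (fun l => op.q l ≠ 1) k, ?_, ?_⟩
    · apply lt_of_le_of_ne hle
      intro e
      rw [e] at hs
      exact hs hqk
    · intro l hl
      constructor
      · intro h1
        by_contra hc
        apply hs
        apply le_antisymm (op_q_le_one op (by omega))
        exact h1.symm.le.trans (op_q_mono op (by omega) (by omega))
      · intro h1
        by_contra hc
        rcases eq_or_lt_of_le hl with e | hlt
        · exact hc (by rw [e, op.q_last])
        · have := Nat.le_findGreatest (P := fun l => op.q l ≠ 1) (n := k) (by omega) hc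
          omega
  have hind : ∀ l, l ≤ k + 1 → ind op.q 1 l = if r < l then 1 else 0 := by
    intro l hl
    unfold ind
    simp only [hr l hl]
  have hmass : mass op 1 = 1 - op.m r := by
    have ht := tele_sum op.m r k hrk.le
    rw [op.m_last] at ht
    rw [← ht]
    apply Finset.sum_congr rfl
    intro l hl
    rw [hind l (by have := (Finset.mem_Icc.1 hl).2; omega)]
  have hdirr : dir op.q 1 r = 1 := by
    unfold dir
    rw [hind _ (by omega), hind _ (by omega), if_pos (by omega), if_neg (lt_irrefl r)]
    simp
  have hdirl : ∀ l, l < k → l ≠ r → dir op.q 1 l = 0 := by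
    intro l h2 h3
    unfold dir
    rw [hind _ (by omega), hind _ (by omega)]
    by_cases c : r < l
    · rw [if_pos (by omega), if_pos c, if_neg (by omega)]; norm_num
    · rw [if_neg (by omega), if_neg c]; simp
  have hik : ind op.q 1 k = 1 := by rw [hind k (by omega), if_pos hrk]
  have : -(mass op 1 * 1 / 2) = (op.m r - 1) / 2 := by rw [hmass]; ring
  rw [this]
  apply deriv_ge_of_right hg
  filter_upwards [self_mem_nhdsWithin] with t ht0
  have ht0' : (0:ℝ) < t := ht0
  have := Phi_one_block (v := Function.update (fun l => opVar S β op l + 0 * dir op.q 1 l) k 0)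
    (v' := Function.update (fun l => opVar S β op l + t * dir op.q 1 l) k 0) op.m_pos
    (fun l hl => by rw [← op.m_last]; exact op_m_mono op hl le_rfl) op.m_zero hrk ht0'.le
    (by rw [Function.update_of_ne hrk.ne]; simpa using opVar_nonneg S β op hrk.le)
    (by
      intro l h1 h2
      rcases eq_or_lt_of_le h2 with rfl | hlt
      · simp
      · rw [Function.update_of_ne hlt.ne]
        have e1 := (hr l (by omega)).2 (by omega)
        have e2 := (hr (l + 1) (by omega)).2 (by omega)
        simp only [opVar, e1, e2]
        rw [if_neg (by omega)]
        ring)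
    (by rw [Function.update_of_ne hrk.ne, Function.update_of_ne hrk.ne, hdirr]; ring)
    (by
      intro l h2 h3
      rcases eq_or_lt_of_le h2 with rfl | hlt
      · simp
      · rw [Function.update_of_ne hlt.ne, Function.update_of_ne hlt.ne, hdirl l hlt h3]; ring) h
  unfold gFn
  rw [hik]
  linarith

lemma opVar_eq_zero (hβ : ∃ p ∈ S, 2 ≤ p ∧ β p ≠ 0) {l : ℕ} (hl0 : l ≠ 0) (hl : l ≤ k)
    (hz : opVar S β op l = 0) : op.q (l + 1) = op.q l := by
  unfold opVar at hz
  rw [if_neg hl0] at hz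
  by_contra hc
  have := xi'_strict (S := S) hβ (op_q_nonneg op (by omega : l ≤ k + 1))
    (lt_of_le_of_ne (op.q_mono l hl) (Ne.symm hc))
  linarith

lemma opVar_zero_eq_zero (hβ : ∃ p ∈ S, 2 ≤ p ∧ β p ≠ 0)
    (hz : opVar S β op 0 = 0) : op.q 1 = 0 := by
  unfold opVar at hz
  rw [if_pos rfl] at hz
  by_contra hc
  have h1 := op_q_nonneg op (by omega : 1 ≤ k + 1)
  have := xi'_strict (S := S) hβ le_rfl (lt_of_le_of_ne h1 (Ne.symm hc))
  have := xi'_nonneg S β (le_refl (0:ℝ))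
  linarith

/-- stationarity in all atoms -/
lemma stat_all (hβ : ∃ p ∈ S, 2 ≤ p ∧ β p ≠ 0) (hk : 1 ≤ k)
    (hmin : ∀ op' : OrderParam k, parisiP S h β op ≤ parisiP S h β op')
    {c : ℕ → ℝ}
    (hc : ∀ (v : ℝ → ℕ → ℝ) (v' : ℕ → ℝ) (t0 : ℝ), (∀ l, l < k → v t0 l = opVar S β op l) →
      (∀ l, l < k → HasDerivAt (fun t => v t l) (v' l) t0) →
      (∀ l, l < k → opVar S β op l = 0 → ∀ t, v t l = 0) →
      HasDerivAt (fun t => Phi op.m k h (Function.update (v t) k 0))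
        (∑ l ∈ Finset.range k, c l * v' l) t0)
    {j : ℕ} (hj1 : 1 ≤ j) (hjk : j ≤ k) (ha : op.q j ≠ 0 ∨ opVar S β op 0 ≠ 0) :
    ∑ l ∈ Finset.range k, c l * dir op.q (op.q j) l - ind op.q (op.q j) k / 2 =
      -(mass op (op.q j) * op.q j / 2) := by
  set a := op.q j with hadef
  have ha0 : 0 ≤ a := op_q_nonneg op (by omega)
  have ha1 : a ≤ 1 := op_q_le_one op (by omega)
  have hg : HasDerivAt (gFn S h β op a)
      (∑ l ∈ Finset.range k, c l * dir op.q a l - ind op.q a k / 2) 0 := by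
    have h1 := hc (fun t l => opVar S β op l + t * dir op.q a l) (dir op.q a) 0
      (by intro l _; simp)
      (by
        intro l _
        simpa using ((hasDerivAt_id (0:ℝ)).mul_const (dir op.q a l)).const_add (opVar S β op l))
      (by
        intro l hl hz t
        have : dir op.q a l = 0 := by
          unfold dir
          by_cases c0 : l = 0
          · subst c0
            have h0 := opVar_zero_eq_zero hβ hz
            rw [if_pos rfl, sub_zero]
            unfold ind
            rw [zero_add, if_neg]
            rw [h0]
            rcases ha with ha | ha
            · exact fun e => ha e.symm
            · exact absurd hz ha
          · rw [if_neg c0]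
            have := opVar_eq_zero hβ c0 hl.le hz
            unfold ind
            rw [this, sub_self]
        rw [this, hz]; ring)
    have h2 : HasDerivAt (fun t : ℝ => t * ind op.q a k / 2) (ind op.q a k / 2) 0 := by
      simpa using ((hasDerivAt_id (0:ℝ)).mul_const (ind op.q a k)).div_const 2
    exact h1.sub h2
  apply le_antisymm
  · rcases ha0.eq_or_lt with e | hpos
    · have hq1 : op.q 1 = 0 := by
        apply le_antisymm _ (op_q_nonneg op (by omega))
        rw [e]
        exact op_q_mono op hj1 (by omega)
      rw [← e] at hg ⊢
      have := zero_block_le hβ hk hq1 hg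
      linarith
    · exact stat_le hβ hk hmin hpos ha1 hg
  · rcases ha1.eq_or_lt with e | hlt
    · have hqk : op.q k = 1 := by
        apply le_antisymm (op_q_le_one op (by omega))
        rw [← e]
        exact op_q_mono op hjk (by omega)
      rw [e] at hg ⊢
      exact one_block_ge hk hqk hg
    · exact stat_ge hβ hk hmin ha0 hlt hg

end stationarity



section final

lemma xi_upd {S : Finset ℕ} (β : ℕ → ℝ) {p : ℕ} (hp : p ∈ S) (s x : ℝ) :
    xiFn S (Function.update β p s) x = xiFn S β x + (s ^ 2 - β p ^ 2) * x ^ p := by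
  unfold xiFn
  rw [← Finset.add_sum_erase _ _ hp, ← Finset.add_sum_erase S (fun p => β p ^ 2 * x ^ p) hp]
  have : ∑ i ∈ S.erase p, Function.update β p s i ^ 2 * x ^ i =
      ∑ i ∈ S.erase p, β i ^ 2 * x ^ i := by
    apply Finset.sum_congr rfl
    intro i hi
    rw [Function.update_of_ne (Finset.ne_of_mem_erase hi)]
  rw [this, Function.update_self]
  ring

lemma xi'_upd {S : Finset ℕ} (β : ℕ → ℝ) {p : ℕ} (hp : p ∈ S) (s x : ℝ) :
    xiFn' S (Function.update β p s) x =
      xiFn' S β x + (s ^ 2 - β p ^ 2) * (p * x ^ (p - 1)) := by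
  unfold xiFn'
  rw [← Finset.add_sum_erase _ _ hp,
    ← Finset.add_sum_erase S (fun p => β p ^ 2 * (p : ℝ) * x ^ (p - 1)) hp]
  have : ∑ i ∈ S.erase p, Function.update β p s i ^ 2 * (i : ℝ) * x ^ (i - 1) =
      ∑ i ∈ S.erase p, β i ^ 2 * (i : ℝ) * x ^ (i - 1) := by
    apply Finset.sum_congr rfl
    intro i hi
    rw [Function.update_of_ne (Finset.ne_of_mem_erase hi)]
  rw [this, Function.update_self]
  ring

/-- derivative of the variances in the direction of `β_p ^ 2` -/
def dvar (p : ℕ) (q : ℕ → ℝ) (l : ℕ) : ℝ :=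
  p * q (l + 1) ^ (p - 1) - if l = 0 then 0 else p * q l ^ (p - 1)

variable {S : Finset ℕ} {h : ℝ} {β : ℕ → ℝ} {k : ℕ} {op : OrderParam k}

lemma opVar_upd {p : ℕ} (hp : p ∈ S) (s : ℝ) (l : ℕ) :
    opVar S (Function.update β p s) op l =
      opVar S β op l + (s ^ 2 - β p ^ 2) * dvar p op.q l := by
  unfold opVar dvar
  split_ifs with c
  · subst c
    rw [xi'_upd β hp]
    ring
  · rw [xi'_upd β hp, xi'_upd β hp]
    ring

/-- the functional as a function of `u = s ^ 2 - β_p ^ 2` -/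
lemma parisiP_upd {p : ℕ} (hp : p ∈ S) (hp0 : 0 < p) (hk : 1 ≤ k) (s : ℝ) :
    parisiP S h (Function.update β p s) op =
      Phi op.m k h (Function.update
        (fun l => opVar S β op l + (s ^ 2 - β p ^ 2) * dvar p op.q l) k 0) +
      (xiFn S β 1 / 2 - xiFn' S β (op.q k) / 2 +
        (1 / 2) * ∑ l ∈ Finset.Icc 1 k, (op.m l - op.m (l - 1)) * thetaFn S β (op.q l)) +
      (s ^ 2 - β p ^ 2) * (1 / 2 - p * op.q k ^ (p - 1) / 2 +
        (1 / 2) * ∑ l ∈ Finset.Icc 1 k,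
          (op.m l - op.m (l - 1)) * (op.q l * (p * op.q l ^ (p - 1)) - op.q l ^ p)) := by
  rw [parisiP_formula S h _ hk]
  have h1 : Function.update (opVar S (Function.update β p s) op) k 0 = Function.update
        (fun l => opVar S β op l + (s ^ 2 - β p ^ 2) * dvar p op.q l) k 0 := by
    congr 1
    funext l
    exact opVar_upd hp s l
  have h2 : ∑ l ∈ Finset.Icc 1 k, (op.m l - op.m (l - 1)) *
        thetaFn S (Function.update β p s) (op.q l) =
      ∑ l ∈ Finset.Icc 1 k, (op.m l - op.m (l - 1)) * thetaFn S β (op.q l) +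
      (s ^ 2 - β p ^ 2) * ∑ l ∈ Finset.Icc 1 k,
          (op.m l - op.m (l - 1)) * (op.q l * (p * op.q l ^ (p - 1)) - op.q l ^ p) := by
    rw [Finset.mul_sum, ← Finset.sum_add_distrib]
    apply Finset.sum_congr rfl
    intro l _
    unfold thetaFn
    rw [xi_upd β hp, xi'_upd β hp]
    ring
  rw [h1, h2, xi_upd β hp, xi'_upd β hp, one_pow]
  ring

/-- the linear combination of the stationarity equations -/
lemma stat_sum (hβ : ∃ p ∈ S, 2 ≤ p ∧ β p ≠ 0) (hk : 1 ≤ k)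
    (hmin : ∀ op' : OrderParam k, parisiP S h β op ≤ parisiP S h β op')
    {c : ℕ → ℝ}
    (hc : ∀ (v : ℝ → ℕ → ℝ) (v' : ℕ → ℝ) (t0 : ℝ), (∀ l, l < k → v t0 l = opVar S β op l) →
      (∀ l, l < k → HasDerivAt (fun t => v t l) (v' l) t0) →
      (∀ l, l < k → opVar S β op l = 0 → ∀ t, v t l = 0) →
      HasDerivAt (fun t => Phi op.m k h (Function.update (v t) k 0))
        (∑ l ∈ Finset.range k, c l * v' l) t0)
    {p : ℕ} (hφ : (p : ℝ) * (0:ℝ) ^ (p - 1) = 0 ∨ opVar S β op 0 ≠ 0) :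
    ∑ l ∈ Finset.range k, c l * dvar p op.q l - p * op.q k ^ (p - 1) / 2 =
      -(1 / 2) * ∑ l ∈ Finset.Icc 1 k,
        (op.m l - op.m (l - 1)) * (op.q l * (p * op.q l ^ (p - 1))) := by
  classical
  set φ : ℝ → ℝ := fun x => p * x ^ (p - 1) with hφd
  set Q : Finset ℝ := (Finset.Icc 1 k).image op.q with hQ
  have hind : ∀ (f : ℝ → ℝ) l, 1 ≤ l → l ≤ k → f (op.q l) = ∑ a ∈ Q, f a * ind op.q a l := by
    intro f l h1 h2
    have hm : op.q l ∈ Q := Finset.mem_image_of_mem _ (Finset.mem_Icc.2 ⟨h1, h2⟩)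
    unfold ind
    simp only [mul_ite, mul_one, mul_zero]
    rw [Finset.sum_ite_eq, if_pos hm]
  have hd : ∀ l, l < k → dvar p op.q l = ∑ a ∈ Q, φ a * dir op.q a l := by
    intro l hl
    unfold dvar dir
    simp only [mul_sub, Finset.sum_sub_distrib]
    rw [← hind φ (l + 1) (by omega) (by omega)]
    congr 1
    split_ifs with c0
    · simp
    · rw [← hind φ l (by omega) (by omega)]
  have e1 : ∑ l ∈ Finset.range k, c l * dvar p op.q l - φ (op.q k) / 2 =
      ∑ a ∈ Q, φ a * (∑ l ∈ Finset.range k, c l * dir op.q a l - ind op.q a k / 2) := by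
    simp only [mul_sub, Finset.sum_sub_distrib]
    congr 1
    · simp only [Finset.mul_sum]
      rw [Finset.sum_comm]
      apply Finset.sum_congr rfl
      intro l hl
      rw [hd l (Finset.mem_range.1 hl), Finset.mul_sum]
      apply Finset.sum_congr rfl
      intro a _
      ring
    · rw [hind φ k hk le_rfl, Finset.sum_div]
      apply Finset.sum_congr rfl
      intro a _
      ring
  have e2 : ∀ a ∈ Q, φ a * (∑ l ∈ Finset.range k, c l * dir op.q a l - ind op.q a k / 2) =
      -(1 / 2) * ∑ l ∈ Finset.Icc 1 k,
        (op.m l - op.m (l - 1)) * ((a * φ a) * ind op.q a l) := by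
    intro a haQ
    obtain ⟨j, hj, rfl⟩ := Finset.mem_image.1 haQ
    obtain ⟨hj1, hjk⟩ := Finset.mem_Icc.1 hj
    by_cases hcase : op.q j ≠ 0 ∨ opVar S β op 0 ≠ 0
    · rw [stat_all hβ hk hmin hc hj1 hjk hcase]
      unfold mass
      have : ∑ l ∈ Finset.Icc 1 k, (op.m l - op.m (l - 1)) *
          ((op.q j * φ (op.q j)) * ind op.q (op.q j) l) =
          (op.q j * φ (op.q j)) * ∑ l ∈ Finset.Icc 1 k, (op.m l - op.m (l - 1)) *
            ind op.q (op.q j) l := by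
        rw [Finset.mul_sum]
        apply Finset.sum_congr rfl
        intro l _
        ring
      rw [this]
      ring
    · push Not at hcase
      have h0 : φ (op.q j) = 0 := by
        rw [hcase.1]
        rcases hφ with h0 | h0
        · exact h0
        · exact absurd hcase.2 h0
      rw [h0]
      simp
  change ∑ l ∈ Finset.range k, c l * dvar p op.q l - φ (op.q k) / 2 =
      -(1 / 2) * ∑ l ∈ Finset.Icc 1 k, (op.m l - op.m (l - 1)) * (op.q l * φ (op.q l))
  rw [e1, Finset.sum_congr rfl e2, ← Finset.mul_sum, Finset.sum_comm]
  congr 1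
  apply Finset.sum_congr rfl
  intro l hl
  obtain ⟨h1, h2⟩ := Finset.mem_Icc.1 hl
  rw [hind (fun x => x * φ x) l h1 h2, Finset.mul_sum]

lemma dvar_eq_zero (hβ : ∃ p ∈ S, 2 ≤ p ∧ β p ≠ 0) {p : ℕ} (hφ : (p : ℝ) * (0:ℝ) ^ (p - 1) = 0 ∨ opVar S β op 0 ≠ 0)
    {l : ℕ} (hl : l < k) (hz : opVar S β op l = 0) : dvar p op.q l = 0 := by
  unfold dvar
  by_cases c0 : l = 0
  · subst c0
    rw [if_pos rfl, sub_zero, zero_add, opVar_zero_eq_zero hβ hz]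
    rcases hφ with h0 | h0
    · exact h0
    · exact absurd hz h0
  · rw [if_neg c0, opVar_eq_zero hβ c0 hl.le hz, sub_self]

lemma main_ne (hβ : ∃ p ∈ S, 2 ≤ p ∧ β p ≠ 0) (hk : 1 ≤ k)
    (hmin : ∀ op' : OrderParam k, parisiP S h β op ≤ parisiP S h β op')
    {p : ℕ} (hp : p ∈ S) (hp0 : 0 < p) (hb : β p ≠ 0) :
    HasDerivAt (fun s : ℝ => parisiP S h (Function.update β p s) op)
      (β p * (1 - ∑ l ∈ Finset.Icc 1 k, (op.m l - op.m (l - 1)) * op.q l ^ p)) (β p) := by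
  have hφ : (p : ℝ) * (0:ℝ) ^ (p - 1) = 0 ∨ opVar S β op 0 ≠ 0 := by
    rcases Nat.lt_or_ge 1 p with h2 | h2
    · left
      rw [zero_pow (by omega), mul_zero]
    · right
      have hp1 : p = 1 := by omega
      subst hp1
      unfold opVar
      rw [if_pos rfl]
      have hq := op_q_nonneg op (by omega : 1 ≤ k + 1)
      have : 0 < xiFn' S β (op.q 1) := by
        unfold xiFn'
        apply Finset.sum_pos'
        · intro i _; positivity
        · refine ⟨1, hp, ?_⟩
          simp
          positivity
      exact this.ne'
  obtain ⟨c, hc⟩ := Phi_chain_var op.m_pos h (opVar S β op) (fun l hl => opVar_nonneg S β op hl.le)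
  have hs := stat_sum hβ hk hmin hc hφ
  have hu : HasDerivAt (fun s : ℝ => s ^ 2 - β p ^ 2) (2 * β p) (β p) := by
    simpa using (hasDerivAt_pow 2 (β p)).sub_const (β p ^ 2)
  have h1 := hc (fun s l => opVar S β op l + (s ^ 2 - β p ^ 2) * dvar p op.q l)
    (fun l => 2 * β p * dvar p op.q l) (β p)
    (by intro l _; simp)
    (by intro l _; exact (hu.mul_const (dvar p op.q l)).const_add (opVar S β op l))
    (by intro l hl hz t; rw [dvar_eq_zero hβ hφ hl hz, hz]; ring)
  have h2 := (h1.add_const (xiFn S β 1 / 2 - xiFn' S β (op.q k) / 2 +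
        (1 / 2) * ∑ l ∈ Finset.Icc 1 k, (op.m l - op.m (l - 1)) * thetaFn S β (op.q l))).add
    (hu.mul_const (1 / 2 - p * op.q k ^ (p - 1) / 2 +
        (1 / 2) * ∑ l ∈ Finset.Icc 1 k,
          (op.m l - op.m (l - 1)) * (op.q l * (p * op.q l ^ (p - 1)) - op.q l ^ p)))
  have hfun : (fun s : ℝ => parisiP S h (Function.update β p s) op) = _ :=
    funext fun s => parisiP_upd hp hp0 hk s
  rw [hfun]
  refine h2.congr_deriv ?_
  have e3 : ∑ l ∈ Finset.range k, c l * (2 * β p * dvar p op.q l) =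
      2 * β p * ∑ l ∈ Finset.range k, c l * dvar p op.q l := by
    rw [Finset.mul_sum]
    apply Finset.sum_congr rfl
    intro l _
    ring
  have e4 : ∑ l ∈ Finset.Icc 1 k,
          (op.m l - op.m (l - 1)) * (op.q l * (p * op.q l ^ (p - 1)) - op.q l ^ p) =
      ∑ l ∈ Finset.Icc 1 k, (op.m l - op.m (l - 1)) * (op.q l * (p * op.q l ^ (p - 1))) -
      ∑ l ∈ Finset.Icc 1 k, (op.m l - op.m (l - 1)) * op.q l ^ p := by
    simp only [mul_sub, Finset.sum_sub_distrib]
  rw [e3, e4]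
  linear_combination (2 * β p) * hs

lemma even_deriv {f : ℝ → ℝ} {D : ℝ} (hf : HasDerivAt f D 0) (he : ∀ s, f (-s) = f s) :
    HasDerivAt f 0 0 := by
  have h1 : HasDerivAt (fun s => f (-s)) (-D) 0 := by
    have h2 : HasDerivAt f D (-(0:ℝ)) := by simpa using hf
    exact (h2.comp (0:ℝ) (hasDerivAt_neg (0:ℝ))).congr_deriv (by ring)
  have h3 : (fun s => f (-s)) = f := funext he
  rw [h3] at h1
  have := h1.unique hf
  have hD : D = 0 := by linarith
  rwa [hD] at hf

lemma dvar_nonneg (p : ℕ) {l : ℕ} (hl : l ≤ k) : 0 ≤ dvar p op.q l := by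
  unfold dvar
  have h1 := op_q_nonneg op (by omega : l ≤ k + 1)
  have h2 := op.q_mono l hl
  have h3 : 0 ≤ op.q (l + 1) := h1.trans h2
  split_ifs with c
  · rw [sub_zero]; positivity
  · apply sub_nonneg.2
    gcongr

lemma main_zero (hk : 1 ≤ k) {p : ℕ} (hp : p ∈ S) (hp0 : 0 < p) (hb : β p = 0) :
    HasDerivAt (fun s : ℝ => parisiP S h (Function.update β p s) op) 0 0 := by
  have hfun : (fun s : ℝ => parisiP S h (Function.update β p s) op) = _ :=
    funext fun s => parisiP_upd hp hp0 hk s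
  obtain ⟨g, hg⟩ := Phi_chain op.m_pos h (fun l => √(opVar S β op l))
  set σ : ℝ → ℕ → ℝ := fun s l => if opVar S β op l = 0 then s * √(dvar p op.q l) else
    √(opVar S β op l + s ^ 2 * dvar p op.q l) with hσ
  have hσ' : ∀ l, l < k → ∃ D, HasDerivAt (fun s => σ s l) D 0 := by
    intro l hl
    by_cases c : opVar S β op l = 0
    · simp only [hσ, if_pos c]
      exact ⟨_, (hasDerivAt_id (0:ℝ)).mul_const _⟩
    · simp only [hσ, if_neg c]
      exact ⟨_, ((((hasDerivAt_pow 2 (0:ℝ)).mul_const (dvar p op.q l)).const_add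
        (opVar S β op l)).sqrt (by simpa using c))⟩
  choose! σ' hσ'' using hσ'
  have h1 := hg σ σ' 0 (by
      intro l _
      simp only [hσ]
      split_ifs with c
      · simp [c]
      · simp) hσ''
  have h4 : (fun s => Phi op.m k h (Function.update (fun l => (σ s l) ^ 2) k 0)) =
      fun s => Phi op.m k h (Function.update
        (fun l => opVar S β op l + (s ^ 2 - β p ^ 2) * dvar p op.q l) k 0) := by
    funext s
    apply Phi_congr
    intro l hl
    rcases eq_or_lt_of_le hl with rfl | hlt
    · simp
    · rw [Function.update_of_ne hlt.ne, Function.update_of_ne hlt.ne, hb]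
      have hd := dvar_nonneg (op := op) p hl
      have hv := opVar_nonneg S β op hl
      simp only [hσ]
      split_ifs with c
      · rw [mul_pow, Real.sq_sqrt hd, c]; ring
      · rw [Real.sq_sqrt (by positivity)]; ring
  rw [h4] at h1
  have hu : HasDerivAt (fun s : ℝ => s ^ 2 - β p ^ 2) (2 * (0:ℝ)) 0 := by
    simpa using (hasDerivAt_pow 2 (0:ℝ)).sub_const (β p ^ 2)
  have h2 := (h1.add_const (xiFn S β 1 / 2 - xiFn' S β (op.q k) / 2 +
        (1 / 2) * ∑ l ∈ Finset.Icc 1 k, (op.m l - op.m (l - 1)) * thetaFn S β (op.q l))).add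
    (hu.mul_const (1 / 2 - p * op.q k ^ (p - 1) / 2 +
        (1 / 2) * ∑ l ∈ Finset.Icc 1 k,
          (op.m l - op.m (l - 1)) * (op.q l * (p * op.q l ^ (p - 1)) - op.q l ^ p)))
  rw [hfun]
  refine even_deriv h2 ?_
  intro s
  simp only [Pi.add_apply, neg_sq]

end final


/-- If the discrete order parameter `(m,q)` with at most `k` atoms achieves the minimum
of `P(·;β)` over all discrete order parameters with at most `k` atoms, then for every
`p ∈ S` the partial derivative of `P(m,q;β)` with respect to `β_p` exists and equals
`β_p (1 - Σ_{l=1}^k (m_l - m_{l-1}) q_l^p)`. -/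
theorem parisiP_deriv_at_minimizer
    (S : Finset ℕ) (hS : ∀ p ∈ S, 0 < p) (h : ℝ) (β : ℕ → ℝ)
    (hβ : ∃ p ∈ S, 2 ≤ p ∧ β p ≠ 0)
    (k : ℕ) (hk : 1 ≤ k) (op : OrderParam k)
    (hmin : ∀ op' : OrderParam k, parisiP S h β op ≤ parisiP S h β op')
    (p : ℕ) (hp : p ∈ S) :
    HasDerivAt (fun s : ℝ => parisiP S h (Function.update β p s) op)
      (β p * (1 - ∑ l ∈ Finset.Icc 1 k, (op.m l - op.m (l - 1)) * op.q l ^ p)) (β p) := by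
  by_cases hb : β p = 0
  · rw [hb, zero_mul]
    exact main_zero hk hp (hS p hp) hb
  · exact main_ne hβ hk hmin hp (hS p hp) hb
end
end

section
/- For each p ∈ S, the partial derivative of F_N with respect to β_p exists and satisfies ∂F_N/∂β_p = β_p (1 − E⟨R_{1,2}^p⟩). -/
open MeasureTheory ProbabilityTheory Real Filter Topology

noncomputable section

/-- The spin value `±1` attached to a Boolean. -/
def spin (b : Bool) : ℝ := if b then 1 else -1

/-- Index set for the Gaussian disorder: pairs `(p, (i_1, …, i_p))` with `p ∈ S` and
`i_1, …, i_p ∈ {1, …, N}`. -/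
abbrev DisorderIdx (S : Finset ℕ) (N : ℕ) := (p : {x // x ∈ S}) × (Fin (p : ℕ) → Fin N)

/-- The law of the disorder: i.i.d. standard Gaussian random variables `g^{(p)}_{i_1…i_p}`. -/
def disorder (S : Finset ℕ) (N : ℕ) : Measure (DisorderIdx S N → ℝ) :=
  Measure.pi fun _ => gaussianReal 0 1

/-- The mixed `p`-spin Hamiltonian
`H_N(σ) = Σ_{p∈S} β_p N^{-(p-1)/2} Σ_{i_1,…,i_p} g^{(p)}_{i_1…i_p} σ_{i_1} ⋯ σ_{i_p}`. -/
def hamiltonian (S : Finset ℕ) (N : ℕ) (β : ℕ → ℝ) (g : DisorderIdx S N → ℝ)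
    (σ : Fin N → Bool) : ℝ :=
  ∑ p : {x // x ∈ S}, β (p : ℕ) * (N : ℝ) ^ (-(((p : ℕ) : ℝ) - 1) / 2) *
    ∑ i : Fin (p : ℕ) → Fin N, g ⟨p, i⟩ * ∏ j, spin (σ (i j))

/-- The energy including the external field: `H_N(σ) + h Σ_i σ_i`. -/
def energy (S : Finset ℕ) (N : ℕ) (h : ℝ) (β : ℕ → ℝ) (g : DisorderIdx S N → ℝ)
    (σ : Fin N → Bool) : ℝ :=
  hamiltonian S N β g σ + h * ∑ i, spin (σ i)

/-- The free energy `F_N(β) = N⁻¹ E log Σ_σ exp(H_N(σ) + h Σ_i σ_i)`. -/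
def freeEnergy (S : Finset ℕ) (N : ℕ) (h : ℝ) (β : ℕ → ℝ) : ℝ :=
  (N : ℝ)⁻¹ *
    ∫ g, Real.log (∑ σ : Fin N → Bool, Real.exp (energy S N h β g σ)) ∂(disorder S N)

/-- The Gibbs measure `G(σ) = exp(H_N(σ) + h Σ_i σ_i) / Σ_τ exp(H_N(τ) + h Σ_i τ_i)`. -/
def gibbs (S : Finset ℕ) (N : ℕ) (h : ℝ) (β : ℕ → ℝ) (g : DisorderIdx S N → ℝ)
    (σ : Fin N → Bool) : ℝ :=
  Real.exp (energy S N h β g σ) / ∑ τ : Fin N → Bool, Real.exp (energy S N h β g τ)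

/-- The overlap `R_{1,2} = N⁻¹ Σ_{i ≤ N} σ¹_i σ²_i`. -/
def overlap (N : ℕ) (σ1 σ2 : Fin N → Bool) : ℝ :=
  (N : ℝ)⁻¹ * ∑ i, spin (σ1 i) * spin (σ2 i)

/-- Gibbs average `⟨f(σ¹,σ²)⟩` over two independent replicas from the Gibbs measure. -/
def gibbsAvg2 (S : Finset ℕ) (N : ℕ) (h : ℝ) (β : ℕ → ℝ) (g : DisorderIdx S N → ℝ)
    (f : (Fin N → Bool) → (Fin N → Bool) → ℝ) : ℝ :=
  ∑ σ1 : Fin N → Bool, ∑ σ2 : Fin N → Bool, f σ1 σ2 * gibbs S N h β g σ1 * gibbs S N h β g σ2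

/-- `E⟨R_{1,2}^p⟩`: expectation over the disorder of the Gibbs average of the `p`-th
power of the overlap. -/
def overlapMoment (S : Finset ℕ) (N : ℕ) (h : ℝ) (β : ℕ → ℝ) (p : ℕ) : ℝ :=
  ∫ g, gibbsAvg2 S N h β g (fun σ1 σ2 => overlap N σ1 σ2 ^ p) ∂(disorder S N)

/-! ### Gaussian integration by parts -/

lemma integrable_gauss_iff (f : ℝ → ℝ) :
    Integrable f (gaussianReal 0 1) ↔ Integrable (fun x => gaussianPDFReal 0 1 x * f x) := by
  rw [gaussianReal_of_var_ne_zero 0 one_ne_zero,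
    integrable_withDensity_iff_integrable_smul' (measurable_gaussianPDF 0 1)
      (Eventually.of_forall fun x => gaussianPDF_lt_top)]
  simp [toReal_gaussianPDF]

lemma integrable_id_gauss : Integrable (fun x : ℝ => x) (gaussianReal 0 1) :=
  by
  have := memLp_id_gaussianReal (μ := 0) (v := 1) 1
  simp only [ENNReal.coe_one] at this
  exact memLp_one_iff_integrable.1 this

lemma hasDerivAt_gaussPDF (x : ℝ) :
    HasDerivAt (gaussianPDFReal 0 1) (-(x * gaussianPDFReal 0 1 x)) x := by
  rw [gaussianPDFReal_def]
  have h1 : HasDerivAt (fun x : ℝ => -(x - 0) ^ 2 / (2 * ((1 : NNReal) : ℝ))) (-x) x := by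
    have := (((hasDerivAt_id x).sub_const 0).pow 2).neg.div_const (2 * ((1 : NNReal) : ℝ))
    refine this.congr_deriv ?_
    simp
    ring
  refine (h1.exp.const_mul ((√(2 * π * ((1 : NNReal) : ℝ)))⁻¹)).congr_deriv ?_
  ring

/-- One-dimensional Gaussian integration by parts. -/
lemma gauss_ibp_one (f f' : ℝ → ℝ) (hf : ∀ x, HasDerivAt f (f' x) x) (hf'm : Measurable f')
    (C : ℝ) (hfC : ∀ x, |f x| ≤ C) (hf'C : ∀ x, |f' x| ≤ C) :
    ∫ x, x * f x ∂(gaussianReal 0 1) = ∫ x, f' x ∂(gaussianReal 0 1) := by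
  have hfm : Measurable f :=
    (continuous_iff_continuousAt.2 fun x => (hf x).continuousAt).measurable
  have i1 : Integrable (fun x => x * f x) (gaussianReal 0 1) :=
    integrable_id_gauss.mul_bdd (c := C) hfm.aestronglyMeasurable
      (Eventually.of_forall hfC)
  have i2 : Integrable f' (gaussianReal 0 1) :=
    Integrable.of_bound hf'm.aestronglyMeasurable C (Eventually.of_forall hf'C)
  have i3 : Integrable f (gaussianReal 0 1) :=
    Integrable.of_bound hfm.aestronglyMeasurable C (Eventually.of_forall hfC)
  rw [integrable_gauss_iff] at i1 i2 i3
  have key := integral_mul_deriv_eq_deriv_mul_of_integrable (u := f) (u' := f')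
    (v := gaussianPDFReal 0 1) (v' := fun x => -(x * gaussianPDFReal 0 1 x))
    (fun x _ => hf x) (fun x _ => hasDerivAt_gaussPDF x)
    (by refine i1.neg.congr (Eventually.of_forall fun x => ?_); simp; ring)
    (by refine i2.congr (Eventually.of_forall fun x => ?_); simp; ring)
    (by refine i3.congr (Eventually.of_forall fun x => ?_); simp; ring)
  rw [integral_gaussianReal_eq_integral_smul one_ne_zero,
    integral_gaussianReal_eq_integral_smul one_ne_zero]
  have e1 : ∫ x, gaussianPDFReal 0 1 x • (x * f x)
      = - ∫ x, f x * -(x * gaussianPDFReal 0 1 x) := by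
    rw [← integral_neg]; congr 1; ext x; simp; ring
  rw [e1, key, neg_neg]
  congr 1; ext x; simp; ring

section
variable {ι : Type*} [Fintype ι]

/-- Resampling one coordinate preserves the product measure. -/
lemma resample [DecidableEq ι] (j : ι) :
    MeasurePreserving (fun q : (ι → ℝ) × ℝ => Function.update q.1 j q.2)
      ((Measure.pi fun _ : ι => gaussianReal 0 1).prod (gaussianReal 0 1))
      (Measure.pi fun _ : ι => gaussianReal 0 1) := by
  have hm : Measurable (fun q : (ι → ℝ) × ℝ => Function.update q.1 j q.2) := by
    rw [measurable_pi_iff]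
    intro i
    by_cases hi : i = j
    · subst hi; simpa using measurable_snd
    · simp only [Function.update_of_ne hi]
      exact (measurable_pi_apply i).comp measurable_fst
  refine ⟨hm, ?_⟩
  symm
  refine Measure.pi_eq fun s hs => ?_
  rw [Measure.map_apply hm (MeasurableSet.univ_pi hs)]
  have : (fun q : (ι → ℝ) × ℝ => Function.update q.1 j q.2) ⁻¹' Set.univ.pi s
      = (Set.univ.pi (Function.update s j Set.univ)) ×ˢ s j := by
    ext ⟨g, x⟩
    simp only [Set.mem_preimage, Set.mem_pi, Set.mem_univ, true_imp_iff, Set.mem_prod]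
    constructor
    · intro H
      refine ⟨fun i => ?_, by simpa using H j⟩
      by_cases hi : i = j
      · subst hi; simp
      · simpa [hi] using H i
    · rintro ⟨H1, H2⟩ i
      by_cases hi : i = j
      · subst hi; simpa using H2
      · simpa [hi] using H1 i
  rw [this, Measure.prod_prod, Measure.pi_pi]
  rw [← Finset.mul_prod_erase Finset.univ _ (Finset.mem_univ j),
    ← Finset.mul_prod_erase Finset.univ (fun i => gaussianReal 0 1 (s i)) (Finset.mem_univ j)]
  simp only [Function.update_self, measure_univ, one_mul]
  rw [mul_comm]
  congr 1
  refine Finset.prod_congr rfl fun i hi => ?_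
  rw [Function.update_of_ne (Finset.ne_of_mem_erase hi)]

lemma integrable_coord (j : ι) :
    Integrable (fun g : ι → ℝ => g j) (Measure.pi fun _ : ι => gaussianReal 0 1) :=
  (measurePreserving_eval (fun _ : ι => gaussianReal 0 1) j).integrable_comp_of_integrable
    integrable_id_gauss

/-- Gaussian integration by parts for a product of standard Gaussians. -/
lemma gauss_ibp [DecidableEq ι] (j : ι) (f f' : (ι → ℝ) → ℝ)
    (hf : ∀ g x, HasDerivAt (fun y => f (Function.update g j y)) (f' (Function.update g j x)) x)
    (hfm : Measurable f) (hf'm : Measurable f')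
    (C : ℝ) (hfC : ∀ x, |f x| ≤ C) (hf'C : ∀ x, |f' x| ≤ C) :
    ∫ g, g j * f g ∂(Measure.pi fun _ : ι => gaussianReal 0 1)
      = ∫ g, f' g ∂(Measure.pi fun _ : ι => gaussianReal 0 1) := by
  have i1 : Integrable (fun g : ι → ℝ => g j * f g) (Measure.pi fun _ : ι => gaussianReal 0 1) :=
    (integrable_coord j).mul_bdd (c := C) hfm.aestronglyMeasurable (Eventually.of_forall hfC)
  have i2 : Integrable f' (Measure.pi fun _ : ι => gaussianReal 0 1) :=
    Integrable.of_bound hf'm.aestronglyMeasurable C (Eventually.of_forall hf'C)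
  have mp := resample (ι := ι) j
  have t1 := integral_map (μ := (Measure.pi fun _ : ι => gaussianReal 0 1).prod (gaussianReal 0 1))
    mp.measurable.aemeasurable (f := fun g : ι → ℝ => g j * f g)
    (by rw [mp.map_eq]; exact i1.aestronglyMeasurable)
  have t2 := integral_map (μ := (Measure.pi fun _ : ι => gaussianReal 0 1).prod (gaussianReal 0 1))
    mp.measurable.aemeasurable (f := f')
    (by rw [mp.map_eq]; exact i2.aestronglyMeasurable)
  rw [mp.map_eq] at t1 t2
  have j1 := mp.integrable_comp_of_integrable i1
  have j2 := mp.integrable_comp_of_integrable i2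
  simp only [Function.comp_def] at j1 j2
  rw [t1, t2, integral_prod _ j1, integral_prod _ j2]
  congr 1
  ext g
  simp only [Function.update_self]
  refine gauss_ibp_one (fun y => f (Function.update g j y)) (fun y => f' (Function.update g j y))
    (hf g) ?_ C (fun x => hfC _) (fun x => hf'C _)
  exact hf'm.comp (measurable_update g)

end

/-! ### Finite Gibbs weights -/

section
variable {K : Type*} [Fintype K]

/-- Gibbs weights of a finite system with energies `E`. -/
def gw (E : K → ℝ) (σ : K) : ℝ := Real.exp (E σ) / ∑ τ, Real.exp (E τ)

lemma gw_nonneg (E : K → ℝ) (σ : K) : 0 ≤ gw E σ :=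
  div_nonneg (Real.exp_pos _).le (Finset.sum_nonneg fun _ _ => (Real.exp_pos _).le)

lemma Z_pos [Nonempty K] (E : K → ℝ) : 0 < ∑ τ, Real.exp (E τ) :=
  Finset.sum_pos (fun _ _ => Real.exp_pos _) Finset.univ_nonempty

lemma gw_sum [Nonempty K] (E : K → ℝ) : ∑ σ, gw E σ = 1 := by
  unfold gw
  rw [← Finset.sum_div, div_self (Z_pos E).ne']

lemma gw_le_one [Nonempty K] (E : K → ℝ) (σ : K) : gw E σ ≤ 1 := by
  rw [← gw_sum E]
  exact Finset.single_le_sum (fun τ _ => gw_nonneg E τ) (Finset.mem_univ σ)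

lemma hasDerivAt_Z (E : ℝ → K → ℝ) (E' : K → ℝ) (t : ℝ)
    (hE : ∀ σ, HasDerivAt (fun s => E s σ) (E' σ) t) :
    HasDerivAt (fun s => ∑ τ, Real.exp (E s τ)) (∑ τ, Real.exp (E t τ) * E' τ) t :=
  HasDerivAt.fun_sum fun σ _ => (hE σ).exp

lemma hasDerivAt_logZ [Nonempty K] (E : ℝ → K → ℝ) (E' : K → ℝ) (t : ℝ)
    (hE : ∀ σ, HasDerivAt (fun s => E s σ) (E' σ) t) :
    HasDerivAt (fun s => Real.log (∑ τ, Real.exp (E s τ))) (∑ σ, gw (E t) σ * E' σ) t := by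
  refine ((hasDerivAt_Z E E' t hE).log (Z_pos _).ne').congr_deriv ?_
  rw [Finset.sum_div]
  refine Finset.sum_congr rfl fun σ _ => ?_
  unfold gw; ring

lemma hasDerivAt_gw [Nonempty K] (E : ℝ → K → ℝ) (E' : K → ℝ) (t : ℝ)
    (hE : ∀ σ, HasDerivAt (fun s => E s σ) (E' σ) t) (σ : K) :
    HasDerivAt (fun s => gw (E s) σ) (gw (E t) σ * (E' σ - ∑ τ, gw (E t) τ * E' τ)) t := by
  refine ((hE σ).exp.div (hasDerivAt_Z E E' t hE) (Z_pos _).ne').congr_deriv ?_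
  have e : ∑ τ, gw (E t) τ * E' τ = (∑ τ, Real.exp (E t τ) * E' τ) / ∑ τ, Real.exp (E t τ) := by
    rw [Finset.sum_div]
    refine Finset.sum_congr rfl fun σ _ => ?_
    unfold gw; ring
  rw [e]
  unfold gw
  have := (Z_pos (E t)).ne'
  field_simp

lemma abs_gw_avg_le [Nonempty K] (E X : K → ℝ) : |∑ σ, gw E σ * X σ| ≤ ∑ σ, |X σ| := by
  refine (Finset.abs_sum_le_sum_abs _ _).trans (Finset.sum_le_sum fun σ _ => ?_)
  rw [abs_mul, abs_of_nonneg (gw_nonneg E σ)]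
  exact mul_le_of_le_one_left (abs_nonneg _) (gw_le_one E σ)

lemma abs_logZ_le [Nonempty K] (E : K → ℝ) :
    |Real.log (∑ σ, Real.exp (E σ))| ≤ Real.log (Fintype.card K) + ∑ σ, |E σ| := by
  have hc : (1 : ℝ) ≤ Fintype.card K := by exact_mod_cast Fintype.card_pos
  have hl := Real.log_nonneg hc
  have hle : ∀ σ, |E σ| ≤ ∑ τ, |E τ| := fun σ =>
    Finset.single_le_sum (f := fun τ => |E τ|) (fun τ _ => abs_nonneg _) (Finset.mem_univ σ)
  rw [abs_le]
  constructor
  · obtain ⟨σ⟩ := ‹Nonempty K›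
    have h1 : Real.exp (E σ) ≤ ∑ τ, Real.exp (E τ) :=
      Finset.single_le_sum (f := fun τ => Real.exp (E τ)) (fun τ _ => (Real.exp_pos _).le)
        (Finset.mem_univ σ)
    have h2 := (Real.le_log_iff_exp_le ((Real.exp_pos _).trans_le h1)).2 h1
    have := neg_abs_le (E σ)
    have := hle σ
    linarith
  · rw [Real.log_le_iff_le_exp (Z_pos E), Real.exp_add, Real.exp_log (by linarith)]
    calc ∑ σ, Real.exp (E σ) ≤ ∑ _σ : K, Real.exp (∑ τ, |E τ|) :=
          Finset.sum_le_sum fun σ _ => Real.exp_le_exp.2 ((le_abs_self _).trans (hle σ))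
      _ = _ := by simp

variable {ι : Type*} [Fintype ι]

/-- Energy of an abstract Gaussian system with inverse temperature `t`. -/
def en (v w : K → ι → ℝ) (c : K → ℝ) (t : ℝ) (g : ι → ℝ) (σ : K) : ℝ :=
  ∑ j, (t * v σ j + w σ j) * g j + c σ

lemma continuous_en (v w : K → ι → ℝ) (c : K → ℝ) (t : ℝ) (σ : K) :
    Continuous fun g => en v w c t g σ := by
  unfold en; fun_prop

lemma continuous_gw [Nonempty K] (v w : K → ι → ℝ) (c : K → ℝ) (t : ℝ) (σ : K) :
    Continuous fun g => gw (en v w c t g) σ := by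
  unfold gw
  exact ((continuous_en v w c t σ).rexp).div
    (continuous_finsetSum _ fun τ _ => (continuous_en v w c t τ).rexp) fun g => (Z_pos _).ne'

lemma integrable_lin (v : ι → ℝ) :
    Integrable (fun g : ι → ℝ => ∑ j, v j * g j) (Measure.pi fun _ : ι => gaussianReal 0 1) :=
  integrable_finsetSum _ fun j _ => (integrable_coord j).const_mul _

lemma hasDerivAt_int_logZ [Nonempty K] (v w : K → ι → ℝ) (c : K → ℝ) (t : ℝ) :
    HasDerivAt (fun s => ∫ g, Real.log (∑ σ, Real.exp (en v w c s g σ))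
        ∂(Measure.pi fun _ : ι => gaussianReal 0 1))
      (∫ g, ∑ σ, gw (en v w c t g) σ * ∑ j, v σ j * g j
        ∂(Measure.pi fun _ : ι => gaussianReal 0 1)) t := by
  have hcont : ∀ s, Continuous fun g : ι → ℝ => Real.log (∑ σ, Real.exp (en v w c s g σ)) :=
    fun s => (continuous_finsetSum _ fun τ _ => (continuous_en v w c s τ).rexp).log
      fun g => (Z_pos _).ne'
  refine (hasDerivAt_integral_of_dominated_loc_of_deriv_le (s := Set.univ) univ_mem
    (F' := fun s g => ∑ σ, gw (en v w c s g) σ * ∑ j, v σ j * g j)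
    (bound := fun g => ∑ σ, |∑ j, v σ j * g j|)
    (Eventually.of_forall fun s => (hcont s).aestronglyMeasurable) ?_ ?_ ?_ ?_ ?_).2
  · refine Integrable.mono' (g := fun g => Real.log (Fintype.card K) + ∑ σ, |en v w c t g σ|)
      ?_ (hcont t).aestronglyMeasurable (Eventually.of_forall fun g => abs_logZ_le _)
    refine (integrable_const _).add (integrable_finsetSum _ fun σ _ => ?_)
    exact ((integrable_lin _).add (integrable_const _)).abs
  · refine Continuous.aestronglyMeasurable (continuous_finsetSum _ fun σ _ => ?_)
    exact (continuous_gw v w c t σ).mul (by fun_prop)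
  · exact Eventually.of_forall fun g s _ => abs_gw_avg_le _ _
  · exact integrable_finsetSum _ fun σ _ => (integrable_lin _).abs
  · refine Eventually.of_forall fun g s _ => hasDerivAt_logZ _ _ _ fun σ => ?_
    unfold en
    refine HasDerivAt.add_const _ (HasDerivAt.fun_sum fun j _ => ?_)
    exact (((hasDerivAt_mul_const (v σ j)).add_const (w σ j)).mul_const (g j))

lemma ibp_gw [Nonempty K] (v w : K → ι → ℝ) (c : K → ℝ) (t : ℝ) (σ : K) (j : ι) :
    ∫ g, g j * gw (en v w c t g) σ ∂(Measure.pi fun _ : ι => gaussianReal 0 1)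
      = ∫ g, gw (en v w c t g) σ * ((t * v σ j + w σ j)
          - ∑ τ, gw (en v w c t g) τ * (t * v τ j + w τ j))
        ∂(Measure.pi fun _ : ι => gaussianReal 0 1) := by
  classical
  have hB : 0 ≤ ∑ τ, |t * v τ j + w τ j| := Finset.sum_nonneg fun _ _ => abs_nonneg _
  refine gauss_ibp j (fun g => gw (en v w c t g) σ) _ ?_ (continuous_gw v w c t σ).measurable ?_
    (1 + 2 * ∑ τ, |t * v τ j + w τ j|) ?_ ?_
  · intro g x
    refine hasDerivAt_gw (fun y => en v w c t (Function.update g j y))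
      (fun τ => t * v τ j + w τ j) x (fun τ => ?_) σ
    unfold en
    refine HasDerivAt.add_const _ ?_
    have : ∀ i ∈ Finset.univ, HasDerivAt
        (fun y => (t * v τ i + w τ i) * Function.update g j y i)
        (if i = j then t * v τ i + w τ i else 0) x := by
      intro i _
      by_cases hi : i = j
      · subst hi
        simpa using (hasDerivAt_id x).const_mul (t * v τ i + w τ i)
      · simp only [hi, if_false, Function.update_of_ne hi]
        exact hasDerivAt_const _ _
    refine (HasDerivAt.fun_sum this).congr_deriv ?_
    simp
  · refine ((continuous_gw v w c t σ).mul (continuous_const.sub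
      (continuous_finsetSum _ fun τ _ => ?_))).measurable
    exact (continuous_gw v w c t τ).mul continuous_const
  · intro g
    rw [abs_of_nonneg (gw_nonneg _ _)]
    have := gw_le_one (en v w c t g) σ
    linarith
  · intro g
    rw [abs_mul, abs_of_nonneg (gw_nonneg _ _)]
    refine (mul_le_of_le_one_left (abs_nonneg _) (gw_le_one _ _)).trans ?_
    refine (abs_sub _ _).trans ?_
    have h1 := abs_gw_avg_le (en v w c t g) (fun τ => t * v τ j + w τ j)
    have h2 : |t * v σ j + w σ j| ≤ ∑ τ, |t * v τ j + w τ j| :=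
      Finset.single_le_sum (f := fun τ => |t * v τ j + w τ j|) (fun τ _ => abs_nonneg _)
        (Finset.mem_univ σ)
    linarith

/-- The abstract derivative formula. -/
lemma abstract_formula [Nonempty K] (v w : K → ι → ℝ) (c : K → ℝ) (t : ℝ)
    (hvw : ∀ σ τ j, v σ j * w τ j = 0) (M : ℝ) (hM : ∀ σ, ∑ j, v σ j * v σ j = M) :
    ∫ g, ∑ σ, gw (en v w c t g) σ * ∑ j, v σ j * g j
        ∂(Measure.pi fun _ : ι => gaussianReal 0 1)
      = t * (M - ∫ g, ∑ σ, ∑ τ, (∑ j, v σ j * v τ j) * gw (en v w c t g) σ * gw (en v w c t g) τ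
        ∂(Measure.pi fun _ : ι => gaussianReal 0 1)) := by
  have bdd : ∀ f : (ι → ℝ) → ℝ, Continuous f → (∃ C, ∀ g, |f g| ≤ C) →
      Integrable f (Measure.pi fun _ : ι => gaussianReal 0 1) := by
    rintro f hf ⟨C, hC⟩
    exact Integrable.of_bound hf.aestronglyMeasurable C (Eventually.of_forall hC)
  have iG : ∀ σ, Integrable (fun g => gw (en v w c t g) σ)
      (Measure.pi fun _ : ι => gaussianReal 0 1) := fun σ =>
    bdd _ (continuous_gw v w c t σ) ⟨1, fun g => by
      rw [abs_of_nonneg (gw_nonneg _ _)]; exact gw_le_one _ _⟩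
  have iGG : ∀ σ τ, Integrable (fun g => gw (en v w c t g) σ * gw (en v w c t g) τ)
      (Measure.pi fun _ : ι => gaussianReal 0 1) := fun σ τ =>
    bdd _ ((continuous_gw v w c t σ).mul (continuous_gw v w c t τ)) ⟨1, fun g => by
      rw [abs_of_nonneg (mul_nonneg (gw_nonneg _ _) (gw_nonneg _ _))]
      exact mul_le_one₀ (gw_le_one _ _) (gw_nonneg _ _) (gw_le_one _ _)⟩
  have ijG : ∀ σ j, Integrable (fun g : ι → ℝ => g j * gw (en v w c t g) σ)
      (Measure.pi fun _ : ι => gaussianReal 0 1) := fun σ j =>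
    (integrable_coord j).mul_bdd (c := 1) (continuous_gw v w c t σ).aestronglyMeasurable
      (Eventually.of_forall fun g => by
        rw [Real.norm_eq_abs, abs_of_nonneg (gw_nonneg _ _)]; exact gw_le_one _ _)
  have iD : ∀ σ j, Integrable (fun g : ι → ℝ => gw (en v w c t g) σ * ((t * v σ j + w σ j)
          - ∑ τ, gw (en v w c t g) τ * (t * v τ j + w τ j)))
      (Measure.pi fun _ : ι => gaussianReal 0 1) := by
    intro σ j
    have : Integrable (fun g : ι → ℝ => gw (en v w c t g) σ * (t * v σ j + w σ j)
        - ∑ τ, (gw (en v w c t g) σ * gw (en v w c t g) τ) * (t * v τ j + w τ j))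
        (Measure.pi fun _ : ι => gaussianReal 0 1) :=
      ((iG σ).mul_const _).sub (integrable_finsetSum _ fun τ _ => (iGG σ τ).mul_const _)
    refine this.congr (Eventually.of_forall fun g => ?_)
    simp only [mul_sub, Finset.mul_sum, mul_assoc]
  have iR : Integrable (fun g : ι → ℝ => ∑ σ, ∑ τ, (∑ j, v σ j * v τ j) *
      gw (en v w c t g) σ * gw (en v w c t g) τ) (Measure.pi fun _ : ι => gaussianReal 0 1) := by
    refine integrable_finsetSum _ fun σ _ => integrable_finsetSum _ fun τ _ => ?_
    simp only [mul_assoc]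
    exact (iGG σ τ).const_mul _
  calc _ = ∫ g, ∑ σ, ∑ j, v σ j * (g j * gw (en v w c t g) σ)
        ∂(Measure.pi fun _ : ι => gaussianReal 0 1) := by
        congr 1; ext g
        refine Finset.sum_congr rfl fun σ _ => ?_
        rw [Finset.mul_sum]
        refine Finset.sum_congr rfl fun j _ => ?_
        ring
    _ = ∑ σ, ∑ j, v σ j * ∫ g, g j * gw (en v w c t g) σ
        ∂(Measure.pi fun _ : ι => gaussianReal 0 1) := by
        rw [integral_finsetSum _ fun σ _ => integrable_finsetSum _ fun j _ =>
          (ijG σ j).const_mul _]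
        refine Finset.sum_congr rfl fun σ _ => ?_
        rw [integral_finsetSum _ fun j _ => (ijG σ j).const_mul _]
        simp only [integral_const_mul]
    _ = ∫ g, ∑ σ, ∑ j, v σ j * (gw (en v w c t g) σ * ((t * v σ j + w σ j)
          - ∑ τ, gw (en v w c t g) τ * (t * v τ j + w τ j)))
        ∂(Measure.pi fun _ : ι => gaussianReal 0 1) := by
        simp only [ibp_gw]
        rw [integral_finsetSum _ fun σ _ => integrable_finsetSum _ fun j _ =>
          (iD σ j).const_mul _]
        refine Finset.sum_congr rfl fun σ _ => ?_
        rw [integral_finsetSum _ fun j _ => (iD σ j).const_mul _]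
        simp only [integral_const_mul]
    _ = ∫ g, t * (M - ∑ σ, ∑ τ, (∑ j, v σ j * v τ j) *
          gw (en v w c t g) σ * gw (en v w c t g) τ)
        ∂(Measure.pi fun _ : ι => gaussianReal 0 1) := by
        congr 1; ext g
        have e : ∀ σ, ∑ j, v σ j * (gw (en v w c t g) σ * ((t * v σ j + w σ j)
            - ∑ τ, gw (en v w c t g) τ * (t * v τ j + w τ j)))
            = t * (gw (en v w c t g) σ * M - ∑ τ, (∑ j, v σ j * v τ j) *
          gw (en v w c t g) σ * gw (en v w c t g) τ) := by
          intro σ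
          rw [← hM σ, Finset.mul_sum]
          simp only [Finset.sum_mul]
          rw [Finset.sum_comm, ← Finset.sum_sub_distrib, Finset.mul_sum]
          refine Finset.sum_congr rfl fun j _ => ?_
          have e1 : v σ j * ∑ τ, gw (en v w c t g) τ * (t * v τ j + w τ j)
              = t * ∑ τ, v σ j * v τ j * gw (en v w c t g) τ := by
            rw [Finset.mul_sum, Finset.mul_sum]
            refine Finset.sum_congr rfl fun τ _ => ?_
            linear_combination gw (en v w c t g) τ * hvw σ τ j
          have e2 : ∑ τ, v σ j * v τ j * gw (en v w c t g) σ * gw (en v w c t g) τ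
              = gw (en v w c t g) σ * ∑ τ, v σ j * v τ j * gw (en v w c t g) τ := by
            rw [Finset.mul_sum]
            refine Finset.sum_congr rfl fun τ _ => ?_
            ring
          rw [e2]
          linear_combination gw (en v w c t g) σ * hvw σ σ j - gw (en v w c t g) σ * e1
        simp only [e]
        rw [← Finset.mul_sum, Finset.sum_sub_distrib, ← Finset.sum_mul, gw_sum, one_mul]
    _ = _ := by
        rw [integral_const_mul, integral_sub (integrable_const _) iR]
        simp

end

/-! ### The mixed `p`-spin model -/

/-- Coefficients of the `p`-part of the Hamiltonian. -/
def vcoef (S : Finset ℕ) (N p : ℕ) (σ : Fin N → Bool) (k : DisorderIdx S N) : ℝ :=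
  if (k.1 : ℕ) = p then
    (N : ℝ) ^ (-(((k.1 : ℕ) : ℝ) - 1) / 2) * ∏ j, spin (σ (k.2 j)) else 0

/-- Coefficients of the remaining part of the Hamiltonian. -/
def wcoef (S : Finset ℕ) (N : ℕ) (β : ℕ → ℝ) (p : ℕ) (σ : Fin N → Bool)
    (k : DisorderIdx S N) : ℝ :=
  if (k.1 : ℕ) = p then 0 else
    β k.1 * ((N : ℝ) ^ (-(((k.1 : ℕ) : ℝ) - 1) / 2) * ∏ j, spin (σ (k.2 j)))

lemma energy_eq_en (S : Finset ℕ) (N : ℕ) (h : ℝ) (β : ℕ → ℝ) (p : ℕ) (t : ℝ)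
    (g : DisorderIdx S N → ℝ) :
    energy S N h (Function.update β p t) g
      = en (vcoef S N p) (wcoef S N β p) (fun σ => h * ∑ i, spin (σ i)) t g := by
  ext σ
  unfold energy en hamiltonian
  congr 1
  rw [Fintype.sum_sigma]
  refine Finset.sum_congr rfl fun q _ => ?_
  rw [Finset.mul_sum]
  refine Finset.sum_congr rfl fun i _ => ?_
  unfold vcoef wcoef
  by_cases hq : (q : ℕ) = p
  · simp [hq]; ring
  · simp [hq]; ring

lemma v_inner (S : Finset ℕ) (N : ℕ) (hN : 1 ≤ N) (p : ℕ) (hp : p ∈ S)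
    (σ τ : Fin N → Bool) :
    ∑ k, vcoef S N p σ k * vcoef S N p τ k = N * overlap N σ τ ^ p := by
  have hN0 : (0 : ℝ) < N := by exact_mod_cast hN
  rw [Fintype.sum_sigma, Finset.sum_eq_single ⟨p, hp⟩]
  · simp only [vcoef, if_true]
    have e : ∀ i : Fin p → Fin N,
        ((N : ℝ) ^ (-((p : ℝ) - 1) / 2) * ∏ j, spin (σ (i j))) *
          ((N : ℝ) ^ (-((p : ℝ) - 1) / 2) * ∏ j, spin (τ (i j)))
        = (N : ℝ) * ((N : ℝ)⁻¹) ^ p * ∏ j, spin (σ (i j)) * spin (τ (i j)) := by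
      intro i
      have : (N : ℝ) ^ (-((p : ℝ) - 1) / 2) * (N : ℝ) ^ (-((p : ℝ) - 1) / 2)
          = (N : ℝ) * ((N : ℝ)⁻¹) ^ p := by
        rw [← Real.rpow_add hN0, show -((p : ℝ) - 1) / 2 + -((p : ℝ) - 1) / 2 = 1 + -(p : ℝ) by ring,
          Real.rpow_add hN0, Real.rpow_one, Real.rpow_neg hN0.le, Real.rpow_natCast, inv_pow]
      rw [← this, Finset.prod_mul_distrib]
      ring
    simp only [e]
    rw [← Finset.mul_sum, ← Fintype.sum_pow (fun i => spin (σ i) * spin (τ i)), overlap, mul_pow,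
      mul_assoc]
  · intro q _ hq
    refine Finset.sum_eq_zero fun i _ => ?_
    have : (q : ℕ) ≠ p := fun hh => hq (Subtype.ext hh)
    simp [vcoef, this]
  · simp

lemma overlap_self (N : ℕ) (hN : 1 ≤ N) (σ : Fin N → Bool) : overlap N σ σ = 1 := by
  have hN0 : (N : ℝ) ≠ 0 := by positivity
  have : ∀ b, spin b * spin b = 1 := by intro b; cases b <;> simp [spin]
  simp [overlap, this, hN0]

/-- For each `p ∈ S`, the partial derivative of `F_N` with respect to `β_p` exists and
equals `β_p (1 - E⟨R_{1,2}^p⟩)`. -/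
theorem freeEnergy_hasDerivAt
    (S : Finset ℕ) (hS : ∀ p ∈ S, 0 < p) (N : ℕ) (hN : 1 ≤ N) (h : ℝ) (β : ℕ → ℝ)
    (p : ℕ) (hp : p ∈ S) :
    HasDerivAt (fun t : ℝ => freeEnergy S N h (Function.update β p t))
      (β p * (1 - overlapMoment S N h β p)) (β p) := by
  have hN0 : (N : ℝ) ≠ 0 := by positivity
  have hd := (hasDerivAt_int_logZ (vcoef S N p) (wcoef S N β p)
    (fun σ => h * ∑ i, spin (σ i)) (β p)).const_mul ((N : ℝ)⁻¹)
  rw [abstract_formula (vcoef S N p) (wcoef S N β p) (fun σ => h * ∑ i, spin (σ i)) (β p)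
    (fun σ τ j => by unfold vcoef wcoef; split_ifs <;> simp) N
    (fun σ => by rw [v_inner S N hN p hp, overlap_self N hN]; simp)] at hd
  unfold freeEnergy
  simp only [energy_eq_en]
  refine hd.congr_deriv ?_
  have e : ∀ g σ, gw (en (vcoef S N p) (wcoef S N β p) (fun σ => h * ∑ i, spin (σ i)) (β p) g) σ
      = gibbs S N h β g σ := by
    intro g σ
    rw [← energy_eq_en, Function.update_eq_self]
    rfl
  simp only [e, v_inner S N hN p hp]
  have e2 : ∫ g, ∑ σ : Fin N → Bool, ∑ τ : Fin N → Bool,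
      (N : ℝ) * overlap N σ τ ^ p * gibbs S N h β g σ * gibbs S N h β g τ
        ∂(Measure.pi fun _ : DisorderIdx S N => gaussianReal 0 1)
      = N * overlapMoment S N h β p := by
    unfold overlapMoment gibbsAvg2 disorder
    rw [← integral_const_mul]
    simp only [Finset.mul_sum, mul_assoc]
  rw [e2]
  field_simp
end
end
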